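/- arXiv:1403.5673 — 4 statements merged into one kernel-verified Lean document; each statement's English description precedes it below -/
import Mathlib

section
/- Let F be a field of characteristic 0 and let n, m ≥ 1. Let T_{n,m} be the commutative F-subalgebra of the polynomial ring A generated by all coefficients of the characteristic polynomials of all elements of the generic matrix algebra R_{n,m}. Then T_{n,m} is a finitely generated commutative F-algebra, and the subalgebra R_{n,m}·T_{n,m} of M_n(A) is a finitely generated module over T_{n,m}; in particular both T_{n,m} and R_{n,m}·T_{n,m} are Noetherian. -/
/-- The `l`-th generic `n × n` matrix: the matrix whose `(i,j)` entry is the polynomial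
variable `x^{(l)}_{ij}` of `A = F[x^{(l)}_{ij}]`. -/
noncomputable def genericMatrix (F : Type) [Field F] (n m : ℕ) (l : Fin m) :
    Matrix (Fin n) (Fin n) (MvPolynomial (Fin m × Fin n × Fin n) F) :=
  Matrix.of fun i j => MvPolynomial.X (l, i, j)

/-- The algebra `R_{n,m}` of `m` generic `n × n` matrices. -/
noncomputable def genericMatrixAlgebra (F : Type) [Field F] (n m : ℕ) :
    Subalgebra F (Matrix (Fin n) (Fin n) (MvPolynomial (Fin m × Fin n × Fin n) F)) :=
  Algebra.adjoin F (Set.range (genericMatrix F n m))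

/-- `T_{n,m}`: the commutative `F`-subalgebra of `A` generated by all coefficients of
characteristic polynomials of elements of `R_{n,m}`. -/
noncomputable def genericTraceRing (F : Type) [Field F] (n m : ℕ) :
    Subalgebra F (MvPolynomial (Fin m × Fin n × Fin n) F) :=
  Algebra.adjoin F
    {a | ∃ u ∈ genericMatrixAlgebra F n m, ∃ i : ℕ, a = (Matrix.charpoly u).coeff i}

/-- `R_{n,m}·T_{n,m}`: the `F`-subalgebra of `Mₙ(A)` generated by `R_{n,m}` together with
the scalar matrices coming from `T_{n,m}` (equivalently, spanned by products of elements of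
`R_{n,m}` and `T_{n,m}`). -/
noncomputable def genericTraceMatrixAlgebra (F : Type) [Field F] (n m : ℕ) :
    Subalgebra F (Matrix (Fin n) (Fin n) (MvPolynomial (Fin m × Fin n × Fin n) F)) :=
  Algebra.adjoin F
    ((genericMatrixAlgebra F n m : Set (Matrix (Fin n) (Fin n)
        (MvPolynomial (Fin m × Fin n × Fin n) F))) ∪
      (algebraMap (MvPolynomial (Fin m × Fin n × Fin n) F)
          (Matrix (Fin n) (Fin n) (MvPolynomial (Fin m × Fin n × Fin n) F)) ''
        (genericTraceRing F n m : Set (MvPolynomial (Fin m × Fin n × Fin n) F))))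

open Polynomial in
theorem deriv_charpoly_aux {R : Type*} [CommRing R] {n : ℕ} (M : Matrix (Fin n) (Fin n) R) :
    derivative M.charpoly = (M.charmatrix.adjugate).trace := by
  classical
  have key : ∀ i, M.charmatrix.adjugate i i = ∑ σ : Equiv.Perm (Fin n),
      (Equiv.Perm.sign σ : ℤ) • ((∏ j ∈ Finset.univ.erase i, M.charmatrix (σ j) j) * derivative (M.charmatrix (σ i) i)) := by
    intro i
    have e0 : M.charmatrix.adjugate i i = (M.charmatrix.updateCol i (Pi.single i 1)).det := by
      rw [← Matrix.det_transpose, ← Matrix.updateRow_transpose,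
        ← Matrix.adjugate_apply, ← Matrix.adjugate_transpose, Matrix.transpose_apply]
    rw [e0, Matrix.det_apply]
    refine Finset.sum_congr rfl fun σ _ => ?_
    rw [Units.smul_def, ← Finset.prod_erase_mul _ _ (Finset.mem_univ i)]
    congr 2
    · refine Finset.prod_congr rfl fun j hj => ?_
      rw [Matrix.updateCol_ne (Finset.ne_of_mem_erase hj)]
    · rw [Matrix.updateCol_self]
      by_cases h : σ i = i
      · simp [h]
      · simp [h]
  rw [Matrix.charpoly, Matrix.det_apply, Matrix.trace]
  simp only [Matrix.diag_apply, key]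
  rw [Finset.sum_comm, derivative_sum]
  refine Finset.sum_congr rfl fun σ _ => ?_
  rw [← Finset.smul_sum]
  rw [Units.smul_def, derivative_smul, derivative_prod_finset]

open Polynomial in
theorem newton_aux {F R : Type*} [Field F] [CharZero F] [CommRing R] [Algebra F R] {n : ℕ}
    (M : Matrix (Fin n) (Fin n) R) (C : Subalgebra F R) (hC : ∀ j : ℕ, (M ^ j).trace ∈ C) (k : ℕ) :
    M.charpoly.coeff k ∈ C := by
  classical
  rcases subsingleton_or_nontrivial R with hsub | hnon
  · rw [Subsingleton.elim (M.charpoly.coeff k) 0]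
    exact C.zero_mem
  set Q := matPolyEquiv M.charmatrix.adjugate with hQ
  have h1 : (X - Polynomial.C M) * Q = matPolyEquiv (M.charpoly • (1 : Matrix (Fin n) (Fin n) R[X])) := by
    rw [hQ, ← Matrix.matPolyEquiv_charmatrix, ← map_mul, Matrix.mul_adjugate, Matrix.charpoly]
  have h2 : ∀ k, (M.charpoly • (1 : Matrix (Fin n) (Fin n) R[X])).map (fun p => p.coeff k) = M.charpoly.coeff k • (1 : Matrix (Fin n) (Fin n) R) := by
    intro k
    ext i j
    by_cases h : i = j <;> simp [h]
  have h3 : ∀ k, ((X - Polynomial.C M) * Q).coeff k = M.charpoly.coeff k • (1 : Matrix (Fin n) (Fin n) R) := by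
    intro k
    rw [h1, ← h2]
    ext i j
    rw [matPolyEquiv_coeff_apply, Matrix.map_apply]
  have h4 : ∀ k, Q.coeff k = M * Q.coeff (k+1) + M.charpoly.coeff (k+1) • 1 := by
    intro k
    rw [← h3, sub_mul, coeff_sub, coeff_X_mul, coeff_C_mul]; abel
  have h5 : M * Q.coeff 0 + M.charpoly.coeff 0 • 1 = 0 := by
    rw [← h3, sub_mul, coeff_sub, coeff_C_mul]; simp
  have h6 : ∀ k, (Q.coeff k).trace = (k+1) * M.charpoly.coeff (k+1) := by
    intro k
    have := congrArg (fun p => p.coeff k) (deriv_charpoly_aux M)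
    simp only [coeff_derivative] at this
    rw [mul_comm, this, hQ]
    simp [Matrix.trace, finsetSum_coeff]
  have h7 : ∀ k, ((n : R) - k) * M.charpoly.coeff k = - (M * Q.coeff k).trace := by
    intro k
    rcases k with _ | k
    · have := congrArg Matrix.trace h5
      simp at this
      simp
      linear_combination this
    · have := h6 k
      rw [h4 k] at this
      simp at this
      push_cast
      linear_combination this
  have step : ∀ k, (M * Q.coeff k).trace ∈ C → M.charpoly.coeff k ∈ C := by
    intro k b
    rcases lt_trichotomy k n with hkn | hkn | hkn
    · have e : M.charpoly.coeff k = ((n - k : F))⁻¹ • (- (M * Q.coeff k).trace) := by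
        rw [← h7 k]
        have : ((n : R) - k) = algebraMap F R (n - k) := by simp
        rw [this, ← Algebra.smul_def, smul_smul, inv_mul_cancel₀, one_smul]
        rw [sub_ne_zero]
        exact_mod_cast hkn.ne'
      rw [e]
      exact C.smul_mem (C.neg_mem b) _
    · have hd := M.charpoly_natDegree_eq_dim
      have hm := M.charpoly_monic.coeff_natDegree
      rw [hd, Fintype.card_fin] at hm
      rw [hkn, hm]
      exact C.one_mem
    · have hd := M.charpoly_natDegree_eq_dim
      rw [coeff_eq_zero_of_natDegree_lt (by rw [hd, Fintype.card_fin]; exact hkn)]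
      exact C.zero_mem
  have main : ∀ d k, Q.natDegree < k + d →
      M.charpoly.coeff k ∈ C ∧ ∀ j, (M ^ j * Q.coeff k).trace ∈ C := by
    intro d
    induction d with
    | zero =>
      intro k hk
      have hz : Q.coeff k = 0 := coeff_eq_zero_of_natDegree_lt hk
      exact ⟨step k (by simp [hz]), by simp [hz]⟩
    | succ d ih =>
      intro k hk
      obtain ⟨a1, a2⟩ := ih (k+1) (by omega)
      have b : ∀ j, (M ^ j * Q.coeff k).trace ∈ C := by
        intro j
        rw [h4 k, mul_add, ← mul_assoc, ← pow_succ, Matrix.trace_add]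
        refine C.add_mem (a2 _) ?_
        simp only [Matrix.mul_smul, mul_one, Matrix.trace_smul, smul_eq_mul]
        exact C.mul_mem a1 (hC j)
      exact ⟨step k (by simpa using b 1), b⟩
  exact (main (Q.natDegree + 1) k (by omega)).1

/-- If a polynomial over an algebra takes values in a subspace at all scalars of an infinite field,
its coefficients are in the subspace. -/
theorem coeff_mem_of_values {F B : Type*} [Field F] [CharZero F] [Ring B] [Algebra F B]
    (V : Submodule F B) (q : Polynomial B)
    (h : ∀ c : F, q.eval (algebraMap F B c) ∈ V) (k : ℕ) : q.coeff k ∈ V := by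
  by_contra hk
  obtain ⟨f, hf, hV⟩ := Submodule.exists_le_ker_of_notMem hk
  have hz : (∑ i ∈ Finset.range (q.natDegree + 1), Polynomial.monomial i (f (q.coeff i))) = 0 := by
    apply Polynomial.funext
    intro c
    have := hV (h c)
    rw [Polynomial.eval_eq_sum_range, LinearMap.mem_ker, map_sum] at this
    rw [Polynomial.eval_finsetSum, Polynomial.eval_zero, ← this]
    refine Finset.sum_congr rfl fun i _ => ?_
    rw [Polynomial.eval_monomial, ← map_pow, ← Algebra.commutes, ← Algebra.smul_def, map_smul,
      smul_eq_mul, mul_comm]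
  have h2 := congrArg (fun p => Polynomial.coeff p k) hz
  simp only [Polynomial.finsetSum_coeff, Polynomial.coeff_monomial, Polynomial.coeff_zero] at h2
  rw [Finset.sum_ite_eq'] at h2
  split_ifs at h2 with hh
  · exact hf h2
  · apply hf
    rw [Polynomial.coeff_eq_zero_of_natDegree_lt, map_zero]
    simpa using hh

theorem linearize {F B : Type*} [Field F] [CharZero F] [Ring B] [Algebra F B]
    (V P : Submodule F B) (n : ℕ) (h : ∀ x ∈ P, x ^ n ∈ V) (x y : B) (hx : x ∈ P) (hy : y ∈ P) :
    ∑ i ∈ Finset.range n, x ^ i * y * x ^ (n - 1 - i) ∈ V := by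
  have hc : ∀ n : ℕ, ((Polynomial.C x + Polynomial.C y * Polynomial.X) ^ n).coeff 0 = x ^ n ∧
      ((Polynomial.C x + Polynomial.C y * Polynomial.X) ^ n).coeff 1 =
      ∑ i ∈ Finset.range n, x ^ i * y * x ^ (n - 1 - i) := by
    intro n
    induction n with
    | zero => simp [Polynomial.coeff_one]
    | succ n ih =>
      obtain ⟨i1, i2⟩ := ih
      constructor
      · rw [pow_succ, Polynomial.mul_coeff_zero, i1]
        simp [pow_succ]
      · rw [pow_succ, Polynomial.mul_coeff_one, i1, i2, Finset.sum_range_succ]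
        simp only [Polynomial.coeff_add, Polynomial.coeff_C_zero, Polynomial.coeff_C_mul, Polynomial.coeff_X_zero,
          Polynomial.coeff_X_one, Polynomial.coeff_C_succ, mul_zero, add_zero, zero_add, mul_one]
        rw [add_comm, Finset.sum_mul]
        simp only [Nat.add_sub_cancel, Nat.sub_self, pow_zero, mul_one]
        congr 1
        refine Finset.sum_congr rfl fun i hi => ?_
        have : n - i = (n - 1 - i) + 1 := by have := Finset.mem_range.1 hi; omega
        rw [this, pow_succ]; simp only [mul_assoc]
  rw [← (hc n).2]
  apply coeff_mem_of_values
  intro c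
  have : Polynomial.eval (algebraMap F B c) ((Polynomial.C x + Polynomial.C y * Polynomial.X) ^ n)
      = (x + c • y) ^ n := by
    let e : Polynomial B →+* B := Polynomial.eval₂RingHom' (RingHom.id B) (algebraMap F B c)
      (fun a => (Algebra.commutes c a).symm)
    have he : ∀ q : Polynomial B, Polynomial.eval (algebraMap F B c) q = e q := fun q => rfl
    rw [he, map_pow, map_add, map_mul, ← he, ← he, ← he, Polynomial.eval_C, Polynomial.eval_C,
      Polynomial.eval_X, ← Algebra.commutes, ← Algebra.smul_def]
  rw [this]
  exact h _ (P.add_mem hx (P.smul_mem _ hy))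

/-- Key step of Nagata-Higman. -/
theorem higman_step {F B : Type*} [Field F] [CharZero F] [Ring B] [Algebra F B]
    (P V : Submodule F B) (hPl : ∀ a, ∀ x ∈ P, a * x ∈ P) (hPr : ∀ a, ∀ x ∈ P, x * a ∈ P)
    (hVl : ∀ a, ∀ x ∈ V, a * x ∈ V) (hVr : ∀ a, ∀ x ∈ V, x * a ∈ V) (n : ℕ)
    (h : ∀ x ∈ P, x ^ (n + 1) ∈ V) (x y z : B) (hx : x ∈ P) (hy : y ∈ P) (hz : z ∈ P) :
    x ^ n * z * y ^ n ∈ V := by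
  have h1 : ∑ j ∈ Finset.range (n + 1), (∑ i ∈ Finset.range (n + 1),
      x ^ i * (z * y ^ j) * x ^ (n - i)) * y ^ (n - j) ∈ V := by
    refine V.sum_mem fun j _ => hVr _ _ ?_
    have := linearize V P (n + 1) h x (z * y ^ j) hx (hPr _ _ hz)
    simpa using this
  have h2 : ∀ i < n, ∑ j ∈ Finset.range (n + 1), x ^ i * (z * y ^ j) * x ^ (n - i) * y ^ (n - j) ∈ V := by
    intro i hi
    have hxp : x ^ (n - i) ∈ P := by
      obtain ⟨k, hk⟩ : ∃ k, n - i = k + 1 := ⟨n - i - 1, by omega⟩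
      rw [hk, pow_succ]
      exact hPl _ _ hx
    have := hVl (x ^ i * z) _ (linearize V P (n + 1) h y (x ^ (n - i)) hy hxp)
    rw [Finset.mul_sum] at this
    simpa [mul_assoc] using this
  simp only [Finset.sum_mul] at h1
  rw [Finset.sum_comm, Finset.sum_range_succ] at h1
  have h3 := (V.add_mem_iff_right (V.sum_mem fun i hi => h2 i (Finset.mem_range.1 hi))).1 h1
  have h4 : ∑ j ∈ Finset.range (n + 1), x ^ n * (z * y ^ j) * x ^ (n - n) * y ^ (n - j)
      = ((n + 1 : ℕ) : F) • (x ^ n * z * y ^ n) := by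
    rw [Finset.sum_congr rfl (g := fun _ => x ^ n * z * y ^ n), Finset.sum_const, Finset.card_range, Nat.cast_smul_eq_nsmul]
    intro j hj
    have : j + (n - j) = n := by have := Finset.mem_range.1 hj; omega
    rw [Nat.sub_self, pow_zero, mul_one]
    rw [← mul_assoc, mul_assoc (x ^ n * z), ← pow_add, this]
  rw [h4] at h3
  exact (V.smul_mem_iff (by exact_mod_cast Nat.succ_ne_zero n)).1 h3

/-- Nagata-Higman bound. -/
def nhBound : ℕ → ℕ
  | 0 => 0
  | n + 1 => nhBound n + 1 + nhBound n

theorem nagata_higman {F B : Type*} [Field F] [CharZero F] [Ring B] [Algebra F B]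
    (P : Submodule F B) (hPl : ∀ a, ∀ x ∈ P, a * x ∈ P) (hPr : ∀ a, ∀ x ∈ P, x * a ∈ P) (n : ℕ) :
    ∀ V : Submodule F B, (∀ a, ∀ x ∈ V, a * x ∈ V) → (∀ a, ∀ x ∈ V, x * a ∈ V) →
    (∀ x ∈ P, x ^ n ∈ V) → ∀ l : List B, l.length = nhBound n → (∀ x ∈ l, x ∈ P) → l.prod ∈ V := by
  induction n with
  | zero =>
    intro V hVl hVr h l hl hlP
    rw [List.length_eq_zero_iff.1 hl]
    simpa using h 0 P.zero_mem
  | succ n ih =>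
    intro V hVl hVr h l hl hlP
    let V1 : Submodule F B :=
      { carrier := {v | ∀ z ∈ P, ∀ y ∈ P, v * z * y ^ n ∈ V}
        zero_mem' := by intro z _ y _; simp
        add_mem' := by
          intro a b ha hb z hz y hy
          rw [add_mul, add_mul]
          exact V.add_mem (ha z hz y hy) (hb z hz y hy)
        smul_mem' := by
          intro c a ha z hz y hy
          rw [smul_mul_assoc, smul_mul_assoc]
          exact V.smul_mem _ (ha z hz y hy) }
    have k1 := ih V1 (by
        intro a x hx z hz y hy
        rw [mul_assoc a, mul_assoc a]
        exact hVl _ _ (hx z hz y hy)) (by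
        intro a x hx z hz y hy
        rw [mul_assoc x]
        exact hx _ (hPl a z hz) y hy) (fun x hx z hz y hy =>
          higman_step P V hPl hPr hVl hVr n h x y z hx hy hz)
    let V2 : Submodule F B :=
      { carrier := {v | ∀ l : List B, l.length = nhBound n → (∀ x ∈ l, x ∈ P) → ∀ z ∈ P, l.prod * z * v ∈ V}
        zero_mem' := by intro l _ _ z _; simp
        add_mem' := by
          intro a b ha hb l hl hlP z hz
          rw [mul_add]
          exact V.add_mem (ha l hl hlP z hz) (hb l hl hlP z hz)
        smul_mem' := by
          intro c a ha l hl hlP z hz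
          rw [mul_smul_comm]
          exact V.smul_mem _ (ha l hl hlP z hz) }
    have k2 := ih V2 (by
        intro a x hx l hl hlP z hz
        rw [← mul_assoc, mul_assoc l.prod]
        exact hx l hl hlP _ (hPr a z hz)) (by
        intro a x hx l hl hlP z hz
        rw [← mul_assoc]
        exact hVr _ _ (hx l hl hlP z hz)) (fun y hy l hl hlP z hz => k1 l hl hlP z hz y hy)
    have hlen : l.length = nhBound n + 1 + nhBound n := hl
    have hd : l = l.take (nhBound n) ++ (l.drop (nhBound n)) := (List.take_append_drop _ _).symm
    obtain ⟨z, t, hzt⟩ : ∃ z t, l.drop (nhBound n) = z :: t := by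
      apply List.exists_cons_of_ne_nil
      intro h0
      have := congrArg List.length h0
      simp at this
      omega
    have ht : t.length = nhBound n := by
      have := congrArg List.length hzt
      simp at this
      omega
    rw [hzt] at hd
    have hz : z ∈ P := hlP z (by rw [hd]; simp)
    have htP : ∀ x ∈ t, x ∈ P := fun x hx => hlP x (by rw [hd]; simp [hx])
    have := k2 t ht htP (l.take (nhBound n)) (by simp; omega)
      (fun x hx => hlP x (List.mem_of_mem_take hx)) z hz
    rw [hd, List.prod_append, List.prod_cons, ← mul_assoc]
    exact this

section GenericTrace

variable (F : Type) [Field F] (n m : ℕ)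

/-- A word in the generic matrices. -/
noncomputable def gword (l : List (Fin m)) :
    Matrix (Fin n) (Fin n) (MvPolynomial (Fin m × Fin n × Fin n) F) :=
  (l.map (genericMatrix F n m)).prod

/-- Algebra generated by traces of words of length at most `L`. -/
noncomputable def gtr (L : ℕ) : Subalgebra F (MvPolynomial (Fin m × Fin n × Fin n) F) :=
  Algebra.adjoin F {t | ∃ l : List (Fin m), l.length ≤ L ∧ t = (gword F n m l).trace}

/-- Algebra generated by traces of all words. -/
noncomputable def gtrAll : Subalgebra F (MvPolynomial (Fin m × Fin n × Fin n) F) :=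
  Algebra.adjoin F {t | ∃ l : List (Fin m), t = (gword F n m l).trace}

theorem gword_append (l l' : List (Fin m)) :
    gword F n m (l ++ l') = gword F n m l * gword F n m l' := by
  simp [gword]

theorem gword_mem (l : List (Fin m)) : gword F n m l ∈ genericMatrixAlgebra F n m := by
  apply Subalgebra.list_prod_mem
  intro x hx
  obtain ⟨i, _, rfl⟩ := List.mem_map.1 hx
  exact Algebra.subset_adjoin ⟨i, rfl⟩

theorem mem_span_gword {x} (hx : x ∈ genericMatrixAlgebra F n m) :
    x ∈ Submodule.span F (Set.range (gword F n m)) := by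
  induction hx using Algebra.adjoin_induction with
  | mem x hx =>
    obtain ⟨i, rfl⟩ := hx
    exact Submodule.subset_span ⟨[i], by simp [gword]⟩
  | algebraMap r =>
    rw [Algebra.algebraMap_eq_smul_one]
    exact Submodule.smul_mem _ _ (Submodule.subset_span ⟨[], by simp [gword]⟩)
  | add x y _ _ hx hy => exact Submodule.add_mem _ hx hy
  | mul x y _ _ hx hy =>
    have := Submodule.mul_mem_mul hx hy
    rw [Submodule.span_mul_span] at this
    refine Submodule.span_mono ?_ this
    rintro _ ⟨_, ⟨l, rfl⟩, _, ⟨l', rfl⟩, rfl⟩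
    exact ⟨l ++ l', gword_append F n m l l'⟩

theorem trace_mem_gtrAll {x} (hx : x ∈ genericMatrixAlgebra F n m) : x.trace ∈ gtrAll F n m := by
  have := mem_span_gword F n m hx
  clear hx
  induction this using Submodule.span_induction with
  | mem x h =>
    obtain ⟨l, rfl⟩ := h
    exact Algebra.subset_adjoin ⟨l, rfl⟩
  | zero => simp
  | add x y _ _ hx hy => rw [Matrix.trace_add]; exact add_mem hx hy
  | smul a x _ hx => rw [Matrix.trace_smul]; exact Subalgebra.smul_mem _ hx a

theorem genericTraceRing_eq [CharZero F] (hn : 1 ≤ n) : genericTraceRing F n m = gtrAll F n m := by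
  have : Nonempty (Fin n) := ⟨⟨0, hn⟩⟩
  apply le_antisymm
  · apply Algebra.adjoin_le
    rintro _ ⟨u, hu, i, rfl⟩
    exact newton_aux u _ (fun j => trace_mem_gtrAll F n m (pow_mem hu j)) i
  · apply Algebra.adjoin_le
    rintro _ ⟨l, rfl⟩
    rw [Matrix.trace_eq_neg_charpoly_coeff]
    exact neg_mem (Algebra.subset_adjoin ⟨_, gword_mem F n m l, _, rfl⟩)

theorem gword_hom (l : List (Fin m)) (i j : Fin n) :
    (gword F n m l i j).IsHomogeneous l.length := by
  induction l generalizing i j with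
  | nil =>
    by_cases h : i = j
    · simp [gword, h, MvPolynomial.isHomogeneous_one]
    · simp [gword, h, MvPolynomial.isHomogeneous_zero]
  | cons a l ih =>
    have : gword F n m (a :: l) = genericMatrix F n m a * gword F n m l := by simp [gword]
    rw [this, Matrix.mul_apply]
    apply MvPolynomial.IsHomogeneous.sum
    intro k _
    rw [List.length_cons, add_comm]
    exact (MvPolynomial.isHomogeneous_X F _).mul (ih k j)

theorem hcomp_mul {σ : Type*} (p q : MvPolynomial σ F) (d : ℕ) :
    MvPolynomial.homogeneousComponent d (p * q) = ∑ ij ∈ Finset.HasAntidiagonal.antidiagonal d,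
      MvPolynomial.homogeneousComponent ij.1 p * MvPolynomial.homogeneousComponent ij.2 q := by
  classical
  apply MvPolynomial.ext
  intro e
  rw [MvPolynomial.coeff_homogeneousComponent, MvPolynomial.coeff_sum]
  simp only [MvPolynomial.coeff_mul, MvPolynomial.coeff_homogeneousComponent]
  rw [Finset.sum_comm]
  have hin : ∀ ab ∈ Finset.HasAntidiagonal.antidiagonal e,
      ∑ ij ∈ Finset.HasAntidiagonal.antidiagonal d,
        (if ab.1.degree = ij.1 then MvPolynomial.coeff ab.1 p else 0) *
        (if ab.2.degree = ij.2 then MvPolynomial.coeff ab.2 q else 0) =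
      if e.degree = d then MvPolynomial.coeff ab.1 p * MvPolynomial.coeff ab.2 q else 0 := by
    intro ab hab
    have hab := Finset.HasAntidiagonal.mem_antidiagonal.1 hab
    have hdeg : ab.1.degree + ab.2.degree = e.degree := by rw [← hab, map_add]
    split_ifs with h
    · rw [Finset.sum_eq_single (ab.1.degree, ab.2.degree)]
      · simp
      · rintro ⟨i, j⟩ _ hne
        by_cases h1 : ab.1.degree = i
        · have h2 : ab.2.degree ≠ j := fun h2 => hne (by rw [h1, h2])
          simp [h2]
        · simp [h1]
      · intro hn
        exact absurd (Finset.HasAntidiagonal.mem_antidiagonal.2 (hdeg.trans h)) hn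
    · apply Finset.sum_eq_zero
      rintro ⟨i, j⟩ hij
      have hij := Finset.HasAntidiagonal.mem_antidiagonal.1 hij
      by_cases h1 : ab.1.degree = i
      · have h2 : ab.2.degree ≠ j := fun h2 => h (by rw [← hdeg, h1, h2]; exact hij)
        simp [h2]
      · simp [h1]
  rw [Finset.sum_congr rfl hin]
  split_ifs <;> simp

theorem gtr_mono {a b : ℕ} (h : a ≤ b) : gtr F n m a ≤ gtr F n m b := by
  apply Algebra.adjoin_mono
  rintro _ ⟨l, hl, rfl⟩
  exact ⟨l, hl.trans h, rfl⟩

theorem hcomp_mem {t} (ht : t ∈ gtrAll F n m) (d : ℕ) :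
    MvPolynomial.homogeneousComponent d t ∈ gtr F n m d := by
  induction ht using Algebra.adjoin_induction generalizing d with
  | mem x hx =>
    obtain ⟨l, rfl⟩ := hx
    have : (gword F n m l).trace.IsHomogeneous l.length := by
      apply MvPolynomial.IsHomogeneous.sum
      intro k _
      exact gword_hom F n m l k k
    rw [MvPolynomial.homogeneousComponent_of_mem this]
    split_ifs with h
    · exact Algebra.subset_adjoin ⟨l, h.ge, rfl⟩
    · exact zero_mem _
  | algebraMap r =>
    rw [MvPolynomial.algebraMap_eq, MvPolynomial.homogeneousComponent_of_mem (MvPolynomial.isHomogeneous_C _ r)]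
    split_ifs with h
    · exact Subalgebra.algebraMap_mem _ r
    · exact zero_mem _
  | add x y _ _ hx hy => rw [map_add]; exact add_mem (hx d) (hy d)
  | mul x y _ _ hx hy =>
    rw [hcomp_mul]
    refine sum_mem fun ij hij => ?_
    have := Finset.HasAntidiagonal.mem_antidiagonal.1 hij
    exact mul_mem (gtr_mono F n m (by omega) (hx _)) (gtr_mono F n m (by omega) (hy _))

theorem comp_gword_span {r} (hr : r ∈ genericMatrixAlgebra F n m) (b : ℕ) :
    r.map (MvPolynomial.homogeneousComponent b) ∈
      Submodule.span F {x | ∃ l : List (Fin m), l.length = b ∧ x = gword F n m l} := by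
  have := mem_span_gword F n m hr
  clear hr
  induction this using Submodule.span_induction with
  | mem x h =>
    obtain ⟨l, rfl⟩ := h
    by_cases h : b = l.length
    · refine Submodule.subset_span ⟨l, h.symm, ?_⟩
      ext1 i j
      rw [Matrix.map_apply, MvPolynomial.homogeneousComponent_of_mem (gword_hom F n m l i j), if_pos h]
    · convert Submodule.zero_mem _
      ext1 i j
      rw [Matrix.map_apply, MvPolynomial.homogeneousComponent_of_mem (gword_hom F n m l i j), if_neg h]
      rfl
  | zero => rw [Matrix.map_zero _ (map_zero _)]; exact zero_mem _
  | add x y _ _ hx hy => rw [Matrix.map_add _ (map_add _)]; exact add_mem hx hy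
  | smul a x _ hx =>
    rw [Matrix.map_smul _ a (fun p => map_smul _ a p)]; exact Submodule.smul_mem _ _ hx

/-- The span of `t • r`, `t` a trace polynomial without constant term. -/
noncomputable def gW : Submodule F (Matrix (Fin n) (Fin n) (MvPolynomial (Fin m × Fin n × Fin n) F)) :=
  Submodule.span F {x | ∃ t ∈ gtrAll F n m, MvPolynomial.constantCoeff t = 0 ∧
    ∃ r ∈ genericMatrixAlgebra F n m, x = t • r}

theorem charpoly_coeff_const (u : Matrix (Fin n) (Fin n) (MvPolynomial (Fin m × Fin n × Fin n) F))
    (hu : ∀ i j, MvPolynomial.constantCoeff (u i j) = 0) (i : ℕ) (hi : i < n) :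
    MvPolynomial.constantCoeff (u.charpoly.coeff i) = 0 := by
  have h0 : u.map (MvPolynomial.constantCoeff (R := F)) = 0 := by
    ext1 i j
    exact hu i j
  have := Matrix.charpoly_map u (MvPolynomial.constantCoeff (R := F) (σ := Fin m × Fin n × Fin n))
  rw [h0, Matrix.charpoly_zero] at this
  rw [← Polynomial.coeff_map, ← this, Polynomial.coeff_X_pow, if_neg]
  simp; omega

theorem pow_mem_gW [CharZero F] (u : Matrix (Fin n) (Fin n) (MvPolynomial (Fin m × Fin n × Fin n) F))
    (huR : u ∈ genericMatrixAlgebra F n m)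
    (hu : ∀ i j, MvPolynomial.constantCoeff (u i j) = 0) : u ^ n ∈ gW F n m := by
  have h := Matrix.aeval_self_charpoly u
  rw [Polynomial.aeval_eq_sum_range, Matrix.charpoly_natDegree_eq_dim, Fintype.card_fin, Finset.sum_range_succ] at h
  have h1 : u.charpoly.coeff n = 1 := by
    have hm := u.charpoly_monic.coeff_natDegree
    rwa [Matrix.charpoly_natDegree_eq_dim, Fintype.card_fin] at hm
  rw [h1, one_smul] at h
  rw [← neg_eq_of_add_eq_zero_right h]
  refine neg_mem (sum_mem fun i hi => Submodule.subset_span ⟨_, ?_, ?_, _, pow_mem huR i, rfl⟩)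
  · exact newton_aux u _ (fun j => trace_mem_gtrAll F n m (pow_mem huR j)) i
  · exact charpoly_coeff_const F n m u hu i (Finset.mem_range.1 hi)

theorem gW_mul (a x) (ha : a ∈ genericMatrixAlgebra F n m) (hx : x ∈ gW F n m) :
    a * x ∈ gW F n m ∧ x * a ∈ gW F n m := by
  induction hx using Submodule.span_induction with
  | mem x h =>
    obtain ⟨t, ht, ht0, r, hr, rfl⟩ := h
    exact ⟨Submodule.subset_span ⟨t, ht, ht0, a * r, mul_mem ha hr, by simp⟩,
      Submodule.subset_span ⟨t, ht, ht0, r * a, mul_mem hr ha, by simp⟩⟩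
  | zero => simp
  | add x y _ _ hx hy =>
    rw [mul_add, add_mul]
    exact ⟨add_mem hx.1 hy.1, add_mem hx.2 hy.2⟩
  | smul c x _ hx =>
    rw [mul_smul_comm, smul_mul_assoc]
    exact ⟨Submodule.smul_mem _ _ hx.1, Submodule.smul_mem _ _ hx.2⟩

theorem gword_mem_gW [CharZero F] (l : List (Fin m)) (hl : l.length = nhBound n) :
    gword F n m l ∈ gW F n m := by
  let B := genericMatrixAlgebra F n m
  let P : Submodule F B :=
    { carrier := {r | ∀ i j, MvPolynomial.constantCoeff (r.1 i j) = 0}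
      zero_mem' := by intro i j; simp
      add_mem' := by intro a b ha hb i j; simp [ha i j, hb i j]
      smul_mem' := by intro c a ha i j; simp [ha i j] }
  let V : Submodule F B := (gW F n m).comap B.val.toLinearMap
  let g : Fin m → B := fun i => ⟨genericMatrix F n m i, Algebra.subset_adjoin ⟨i, rfl⟩⟩
  have := nagata_higman P (by
      intro a x hx i j
      simp [Matrix.mul_apply, hx _ _]) (by
      intro a x hx i j
      simp [Matrix.mul_apply, hx _ _]) n V
      (fun a x hx => (gW_mul F n m a.1 x.1 a.2 hx).1)
      (fun a x hx => (gW_mul F n m a.1 x.1 a.2 hx).2)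
      (fun x hx => pow_mem_gW F n m x.1 x.2 hx) (l.map g) (by simpa using hl) (by
        intro x hx
        obtain ⟨i, _, rfl⟩ := List.mem_map.1 hx
        intro a b
        simp [g, genericMatrix])
  have e : ((l.map g).prod : B).1 = gword F n m l := by
    rw [← Subalgebra.coe_val, map_list_prod, List.map_map]
    rfl
  rw [← e]
  exact this

theorem gword_reduce [CharZero F] (l : List (Fin m)) (hl : l.length = nhBound n) :
    gword F n m l ∈ Submodule.span F {x | ∃ t ∈ gtr F n m (nhBound n), ∃ l' : List (Fin m),
      l'.length < nhBound n ∧ x = t • gword F n m l'} := by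
  set N := nhBound n with hN
  have key : ∀ x ∈ gW F n m, x.map (MvPolynomial.homogeneousComponent N) ∈
      Submodule.span F {x | ∃ t ∈ gtr F n m N, ∃ l' : List (Fin m),
      l'.length < N ∧ x = t • gword F n m l'} := by
    intro x hx
    induction hx using Submodule.span_induction with
    | mem x h =>
      obtain ⟨t, ht, ht0, r, hr, rfl⟩ := h
      have e : (t • r).map (MvPolynomial.homogeneousComponent N) = ∑ ij ∈ Finset.HasAntidiagonal.antidiagonal N,
          MvPolynomial.homogeneousComponent ij.1 t • r.map (MvPolynomial.homogeneousComponent ij.2) := by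
        ext1 i j
        rw [Matrix.sum_apply]
        simp [hcomp_mul]
      rw [e]
      refine sum_mem fun ij hij => ?_
      have hij := Finset.HasAntidiagonal.mem_antidiagonal.1 hij
      rcases Nat.eq_zero_or_pos ij.1 with h0 | h0
      · rw [h0, MvPolynomial.homogeneousComponent_zero, ← MvPolynomial.constantCoeff_eq, ht0]
        simp
      · have h1 := gtr_mono F n m (show ij.1 ≤ N by omega) (hcomp_mem F n m ht ij.1)
        have h2 := comp_gword_span F n m hr ij.2
        generalize r.map (MvPolynomial.homogeneousComponent ij.2) = y at h2
        induction h2 using Submodule.span_induction with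
        | mem x h =>
          obtain ⟨l, hl, rfl⟩ := h
          exact Submodule.subset_span ⟨_, h1, l, by omega, rfl⟩
        | zero => simp
        | add x y _ _ hx hy => rw [smul_add]; exact add_mem hx hy
        | smul c x _ hx => rw [smul_comm]; exact Submodule.smul_mem _ _ hx
    | zero => rw [Matrix.map_zero _ (map_zero _)]; exact zero_mem _
    | add x y _ _ hx hy => rw [Matrix.map_add _ (map_add _)]; exact add_mem hx hy
    | smul c x _ hx =>
      rw [Matrix.map_smul _ c (fun p => map_smul _ c p)]; exact Submodule.smul_mem _ _ hx
  have := key _ (gword_mem_gW F n m l hl)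
  convert this
  ext1 i j
  rw [Matrix.map_apply, MvPolynomial.homogeneousComponent_of_mem (gword_hom F n m l i j), if_pos hl.symm]

theorem trace_gword_mem [CharZero F] (k : ℕ) : ∀ l : List (Fin m), l.length = k →
    (gword F n m l).trace ∈ gtr F n m (nhBound n) := by
  induction k using Nat.strong_induction_on with
  | _ k ih =>
    intro l hl
    by_cases hk : k ≤ nhBound n
    · exact Algebra.subset_adjoin ⟨l, by omega, rfl⟩
    · have h := gword_reduce F n m (l.take (nhBound n)) (by simp; omega)
      rw [← List.take_append_drop (nhBound n) l, gword_append]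
      generalize gword F n m (l.take (nhBound n)) = y at h
      induction h using Submodule.span_induction with
      | mem x h =>
        obtain ⟨t, ht, l', hl', rfl⟩ := h
        rw [smul_mul_assoc, ← gword_append, Matrix.trace_smul]
        exact mul_mem ht (ih _ (by simp; omega) _ rfl)
      | zero => simp
      | add x y _ _ hx hy => rw [add_mul, Matrix.trace_add]; exact add_mem hx hy
      | smul c x _ hx => rw [smul_mul_assoc, Matrix.trace_smul]; exact Subalgebra.smul_mem _ hx c

theorem gtrAll_eq [CharZero F] : gtrAll F n m = gtr F n m (nhBound n) := by
  apply le_antisymm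
  · apply Algebra.adjoin_le
    rintro _ ⟨l, rfl⟩
    exact trace_gword_mem F n m _ l rfl
  · apply Algebra.adjoin_mono
    rintro _ ⟨l, _, rfl⟩
    exact ⟨l, rfl⟩

theorem gword_mem_span [CharZero F] (T : Subalgebra F (MvPolynomial (Fin m × Fin n × Fin n) F))
    (hT : T = gtr F n m (nhBound n)) (k : ℕ) : ∀ l : List (Fin m), l.length = k →
    gword F n m l ∈ Submodule.span T (gword F n m '' {l | l.length < nhBound n}) := by
  induction k using Nat.strong_induction_on with
  | _ k ih =>
    intro l hl
    by_cases hk : k < nhBound n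
    · exact Submodule.subset_span ⟨l, by simpa [hl] using hk, rfl⟩
    · have h := gword_reduce F n m (l.take (nhBound n)) (by simp; omega)
      rw [← List.take_append_drop (nhBound n) l, gword_append]
      generalize gword F n m (l.take (nhBound n)) = y at h
      induction h using Submodule.span_induction with
      | mem x h =>
        obtain ⟨t, ht, l', hl', rfl⟩ := h
        rw [smul_mul_assoc, ← gword_append]
        exact Submodule.smul_mem _ (⟨t, hT ▸ ht⟩ : T) (ih _ (by simp; omega) _ rfl)
      | zero => simp
      | add x y _ _ hx hy => rw [add_mul]; exact add_mem hx hy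
      | smul c x _ hx =>
        rw [smul_mul_assoc]
        exact Submodule.smul_of_tower_mem _ c hx

theorem traceMatrix_mem_span [CharZero F] (hn : 1 ≤ n) {x}
    (hx : x ∈ genericTraceMatrixAlgebra F n m) :
    x ∈ Submodule.span (genericTraceRing F n m) (gword F n m '' {l | l.length < nhBound n}) := by
  set S := Submodule.span (genericTraceRing F n m) (gword F n m '' {l | l.length < nhBound n}) with hS
  have hw : ∀ l, gword F n m l ∈ S := fun l => gword_mem_span F n m _
    ((genericTraceRing_eq F n m hn).trans (gtrAll_eq F n m)) _ l rfl
  have h1 : (1 : Matrix (Fin n) (Fin n) (MvPolynomial (Fin m × Fin n × Fin n) F)) ∈ S := hw []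
  induction hx using Algebra.adjoin_induction with
  | mem x hx =>
    rcases hx with hx | ⟨t, ht, rfl⟩
    · have := mem_span_gword F n m hx
      have hle : Submodule.span F (Set.range (gword F n m)) ≤ S.restrictScalars F := by
        rw [Submodule.span_le]
        rintro _ ⟨l, rfl⟩
        exact hw l
      exact hle this
    · rw [Algebra.algebraMap_eq_smul_one]
      exact S.smul_mem (⟨t, ht⟩ : genericTraceRing F n m) h1
  | algebraMap r =>
    rw [Algebra.algebraMap_eq_smul_one]
    exact Submodule.smul_of_tower_mem _ r h1
  | add x y _ _ hx hy => exact add_mem hx hy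
  | mul x y hx' hy' hx hy =>
    clear hx' hy'
    clear_value S
    rw [hS] at hx
    induction hx using Submodule.span_induction with
    | mem x h =>
      obtain ⟨l, hl, rfl⟩ := h
      rw [hS] at hy
      induction hy using Submodule.span_induction with
      | mem x h =>
        obtain ⟨l', hl', rfl⟩ := h
        rw [← gword_append]
        exact hw _
      | zero => simp
      | add x y _ _ hx hy => rw [mul_add]; exact add_mem hx hy
      | smul c x _ hx => rw [mul_smul_comm]; exact S.smul_mem _ hx
    | zero => simp
    | add x y _ _ hx hy => rw [add_mul]; exact add_mem hx hy
    | smul c x _ hx => rw [smul_mul_assoc]; exact S.smul_mem _ hx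

end GenericTrace

/-- A subring containing the scalars and contained in a finitely spanned module is Noetherian. -/
theorem noeth_aux {T M : Type*} [CommRing T] [IsNoetherianRing T] [Ring M] [Algebra T M]
    (s : Set M) (hs : s.Finite) (K : Subring M) (hK : ∀ t : T, algebraMap T M t ∈ K)
    (hK' : ∀ x ∈ K, x ∈ Submodule.span T s) : IsNoetherianRing K := by
  let f : T →+* K := (algebraMap T M).codRestrict K hK
  let _ : Module T K := Module.compHom _ f
  have hsm : ∀ (t : T) (x : K), t • x = f t * x := fun _ _ => rfl
  have : IsScalarTower T K K := ⟨fun t x y => by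
    rw [hsm, hsm, smul_eq_mul, smul_eq_mul, mul_assoc]⟩
  let g : K →ₗ[T] Submodule.span T s :=
    { toFun := fun x => ⟨x.1, hK' x.1 x.2⟩
      map_add' := fun x y => rfl
      map_smul' := fun t x => by
        apply Subtype.ext
        change algebraMap T M t * x.1 = t • x.1
        rw [← Algebra.smul_def] }
  have : IsNoetherian T (Submodule.span T s) := isNoetherian_span_of_finite _ hs
  have : IsNoetherian T K := isNoetherian_of_injective g (fun x y h => by
    have := congrArg Subtype.val h
    exact Subtype.ext this)
  exact isNoetherian_of_tower T inferInstance

/-- `T_{n,m}` is a finitely generated commutative `F`-algebra and `R_{n,m}·T_{n,m}` is a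
finitely generated `T_{n,m}`-module; in particular both are Noetherian. -/
theorem genericTraceRing_fg_and_noetherian (F : Type) [Field F] [CharZero F]
    (n m : ℕ) (hn : 1 ≤ n) (hm : 1 ≤ m) :
    (genericTraceRing F n m).FG ∧
    (∃ s : Finset (Matrix (Fin n) (Fin n) (MvPolynomial (Fin m × Fin n × Fin n) F)),
      (↑s : Set (Matrix (Fin n) (Fin n) (MvPolynomial (Fin m × Fin n × Fin n) F))) ⊆
        genericTraceMatrixAlgebra F n m ∧
      ∀ x ∈ genericTraceMatrixAlgebra F n m,
        x ∈ Submodule.span (genericTraceRing F n m)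
          (↑s : Set (Matrix (Fin n) (Fin n) (MvPolynomial (Fin m × Fin n × Fin n) F)))) ∧
    IsNoetherianRing (genericTraceRing F n m) ∧
    IsNoetherianRing (genericTraceMatrixAlgebra F n m) := by
  classical
  have hT : genericTraceRing F n m = gtr F n m (nhBound n) :=
    (genericTraceRing_eq F n m hn).trans (gtrAll_eq F n m)
  have hfg : (genericTraceRing F n m).FG := by
    rw [hT]
    refine Subalgebra.fg_def.2 ⟨_, ?_, rfl⟩
    refine ((List.finite_length_le (Fin m) (nhBound n)).image
      (fun l => (gword F n m l).trace)).subset ?_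
    rintro _ ⟨l, hl, rfl⟩
    exact ⟨l, hl, rfl⟩
  have hfin : (gword F n m '' {l | l.length < nhBound n}).Finite :=
    (List.finite_length_lt (Fin m) (nhBound n)).image _
  have hTN : IsNoetherianRing (genericTraceRing F n m) := by
    have : Algebra.FiniteType F (genericTraceRing F n m) :=
      (Subalgebra.fg_iff_finiteType _).1 hfg
    exact Algebra.FiniteType.isNoetherianRing F _
  refine ⟨hfg, ⟨hfin.toFinset, ?_, ?_⟩, hTN, ?_⟩
  · rw [Set.Finite.coe_toFinset]
    rintro _ ⟨l, _, rfl⟩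
    exact Algebra.subset_adjoin (Or.inl (gword_mem F n m l))
  · intro x hx
    rw [Set.Finite.coe_toFinset]
    exact traceMatrix_mem_span F n m hn hx
  · exact noeth_aux (T := genericTraceRing F n m) _ hfin
      (genericTraceMatrixAlgebra F n m).toSubring
      (fun t => Algebra.subset_adjoin (Or.inr ⟨t.1, t.2, rfl⟩))
      (fun x hx => traceMatrix_mem_span F n m hn hx)
end

section
/- Let F be a field of characteristic 0 and let n ≥ 2, m ≥ 2. The inclusion R_{n,m} ⊆ R_{n,m}·T_{n,m} has a nonzero conductor: there exists a nonzero subset I ⊆ R_{n,m} that is simultaneously a two-sided ideal of R_{n,m} and a two-sided ideal of R_{n,m}·T_{n,m}. (Razmyslov's conductor theorem.) -/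
open Matrix

theorem alt_trace {A M N ι : Type*} [CommRing A] [AddCommGroup M] [Module A M] [AddCommGroup N]
    [Module A N] [Fintype ι] [dec0 : DecidableEq ι] (b : Module.Basis ι A M) (f : M [⋀^ι]→ₗ[A] N)
    (g : M →ₗ[A] M) (x : ι → M) :
    ∑ i, f (Function.update x i (g (x i))) = (∑ i, b.repr (g (b i)) i) • f x := by
  let h : M [⋀^ι]→ₗ[A] N :=
    { toFun := fun x => ∑ i, f (Function.update x i (g (x i)))
      map_update_add' := by
        intro dec m i u v
        obtain rfl : dec = dec0 := Subsingleton.elim _ _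
        rw [← Finset.sum_add_distrib]
        refine Finset.sum_congr rfl fun k _ => ?_
        by_cases hk : k = i
        · subst hk
          simp only [Function.update_self, Function.update_idem, map_add, map_smul]
          simp
        · simp only [Function.update_of_ne hk, Function.update_comm hk]
          simp [Function.update_comm (Ne.symm hk)]
      map_update_smul' := by
        intro dec m i c u
        obtain rfl : dec = dec0 := Subsingleton.elim _ _
        rw [Finset.smul_sum]
        refine Finset.sum_congr rfl fun k _ => ?_
        by_cases hk : k = i
        · subst hk
          simp only [Function.update_self, Function.update_idem, map_add, map_smul]
          simp
        · simp only [Function.update_of_ne hk, Function.update_comm hk]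
          simp [Function.update_comm (Ne.symm hk)]
      map_eq_zero_of_eq' := by
        intro v i j hv hij
        rw [Finset.sum_eq_add i j hij]
        · have h1 := f.map_swap (Function.update v i (g (v i))) hij
          have : (Function.update v i (g (v i))) ∘ Equiv.swap i j
              = Function.update v j (g (v j)) := by
            funext k
            by_cases hki : k = i
            · subst hki; simp [Function.update_of_ne hij, Function.update_of_ne hij.symm, hv]
            · by_cases hkj : k = j
              · subst hkj; simp [hv]
              · simp [Equiv.swap_apply_of_ne_of_ne hki hkj, hki, hkj]
          rw [this] at h1
          rw [h1]; simp
        · intro c _ hc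
          apply f.map_eq_zero_of_eq _ _ hij
          simp [Function.update_of_ne hc.1.symm, Function.update_of_ne hc.2.symm, hv]
        · simp
        · simp }
  have key : h = (∑ i, b.repr (g (b i)) i) • f := by
    refine Module.Basis.ext_alternating b fun v hv => ?_
    have hbij : Function.Bijective v := Finite.injective_iff_bijective.mp hv
    let e := Equiv.ofBijective v hbij
    change ∑ i, f (Function.update (fun k => b (v k)) i (g (b (v i)))) = _
    rw [AlternatingMap.smul_apply, ← Equiv.sum_comp e (fun i => b.repr (g (b i)) i), Finset.sum_smul]
    refine Finset.sum_congr rfl fun i _ => ?_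
    conv_lhs => rw [← b.sum_repr (g (b (v i)))]
    rw [AlternatingMap.map_update_sum, Finset.sum_eq_single (v i)]
    · rw [AlternatingMap.map_update_smul]
      congr 2
      funext k
      by_cases hk : k = i
      · subst hk; simp
      · simp [hk]
    · intro c _ hc
      rw [AlternatingMap.map_update_smul]
      obtain ⟨k, rfl⟩ := hbij.2 c
      have hk : k ≠ i := fun h => hc (by rw [h])
      rw [f.map_eq_zero_of_eq _ _ hk, smul_zero]
      simp [hk]
    · simp
  exact congrArg (fun q => q x) key

theorem trace_coords {A : Type*} [CommRing A] {n : ℕ} (z : Matrix (Fin n) (Fin n) A) :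
    ∑ i, (Matrix.stdBasis A (Fin n) (Fin n)).repr (z * (Matrix.stdBasis A (Fin n) (Fin n) i)) i
      = n * z.trace := by
  have : ∀ i : Fin n × Fin n, (Matrix.stdBasis A (Fin n) (Fin n)).repr
      (z * (Matrix.stdBasis A (Fin n) (Fin n) i)) i = z i.1 i.1 := by
    rintro ⟨i, j⟩
    rw [Matrix.stdBasis_eq_single]
    have : ∀ (w : Matrix (Fin n) (Fin n) A) p, (Matrix.stdBasis A (Fin n) (Fin n)).repr w p
      = w p.1 p.2 := by
      intro w p
      simp [Matrix.stdBasis]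
      try rfl
    rw [this]
    simp
  simp [this, Fintype.sum_prod_type, Matrix.trace, Finset.mul_sum]

theorem derivative_det {A ι : Type*} [CommRing A] [Fintype ι] [DecidableEq ι]
    (M : Matrix ι ι (Polynomial A)) :
    Polynomial.derivative M.det
      = ∑ i, (M.updateCol i (fun j => Polynomial.derivative (M j i))).det := by
  simp only [Matrix.det_apply, Polynomial.derivative_sum]
  rw [Finset.sum_comm]
  refine Finset.sum_congr rfl fun s _ => ?_
  rw [← Finset.smul_sum, Units.smul_def, Units.smul_def, Polynomial.derivative_smul]
  congr 1
  rw [Polynomial.derivative_prod_finset]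
  refine Finset.sum_congr rfl fun i _ => ?_
  rw [← Finset.prod_erase_mul _ _ (Finset.mem_univ i)]
  simp only [Matrix.updateCol_self]
  congr 1
  refine Finset.prod_congr rfl fun j hj => ?_
  rw [Matrix.updateCol_ne (Finset.ne_of_mem_erase hj)]

theorem derivative_charpoly {A ι : Type*} [CommRing A] [Fintype ι] [DecidableEq ι]
    (u : Matrix ι ι A) :
    Polynomial.derivative u.charpoly = (Matrix.adjugate (charmatrix u)).trace := by
  rw [Matrix.charpoly, derivative_det, Matrix.trace]
  refine Finset.sum_congr rfl fun i _ => ?_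
  rw [Matrix.diag_apply, Matrix.adjugate_apply, ← Matrix.det_transpose, ← Matrix.updateRow_transpose,
    ← Matrix.det_transpose, Matrix.updateRow_transpose]
  rw [Matrix.transpose_transpose, ← Matrix.cramer_apply, Matrix.cramer_eq_adjugate_mulVec, ← Matrix.adjugate_apply]
  have : (fun j => Polynomial.derivative (charmatrix u j i)) = Pi.single i 1 := by
    funext j
    by_cases h : j = i
    · subst h; simp [charmatrix]
    · simp [charmatrix, h]
  rw [this]; simp

theorem adj_formula {A : Type*} [CommRing A] [IsDomain A] {n : ℕ}
    (u : Matrix (Fin n) (Fin n) A) :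
    Matrix.adjugate (charmatrix u) = ∑ k ∈ Finset.range (n+1),
      (Polynomial.C (u.charpoly.coeff k)) • ∑ i ∈ Finset.range k,
        ((Polynomial.X : Polynomial A)^i) • (u.map Polynomial.C)^(k-1-i) := by
  set q := ∑ k ∈ Finset.range (n+1),
      (Polynomial.C (u.charpoly.coeff k)) • ∑ i ∈ Finset.range k,
        ((Polynomial.X : Polynomial A)^i) • (u.map Polynomial.C)^(k-1-i) with hq
  have hmap : ∀ k, (u.map (Polynomial.C : A →+* Polynomial A))^k = (u^k).map Polynomial.C := by
    intro k
    exact (map_pow (RingHom.mapMatrix (m := Fin n) (Polynomial.C : A →+* Polynomial A)) u k).symm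
  have hdeg : u.charpoly.natDegree < n+1 := by
    rcases n with _ | n
    · simp [Matrix.charpoly]
    · have := u.charpoly_natDegree_eq_dim; simp only [Fintype.card_fin] at this; omega
  have hCH : ∑ k ∈ Finset.range (n+1), (Polynomial.C (u.charpoly.coeff k)) •
      (u.map (Polynomial.C : A →+* Polynomial A))^k = 0 := by
    have := Matrix.aeval_self_charpoly u
    rw [Polynomial.aeval_eq_sum_range' hdeg] at this
    have h2 := congrArg (RingHom.mapMatrix (m := Fin n) (Polynomial.C : A →+* Polynomial A)) this
    rw [map_sum, map_zero] at h2
    rw [← h2]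
    refine Finset.sum_congr rfl fun k _ => ?_
    rw [hmap]
    ext1 i j
    simp
  have h1 : charmatrix u * q = u.charpoly • 1 := by
    have hc : charmatrix u = (Polynomial.X : Polynomial A) • (1 : Matrix (Fin n) (Fin n) _) - u.map Polynomial.C := by
      ext1 i j
      simp [charmatrix, Matrix.scalar_apply, Matrix.smul_one_eq_diagonal]
    have hcomm : Commute ((Polynomial.X : Polynomial A) • (1 : Matrix (Fin n) (Fin n) _)) (u.map Polynomial.C) :=
      (Commute.one_left _).smul_left _
    have : charmatrix u * q = ∑ k ∈ Finset.range (n+1), (Polynomial.C (u.charpoly.coeff k)) •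
      ((Polynomial.X : Polynomial A)^k • (1 : Matrix (Fin n) (Fin n) _) - (u.map Polynomial.C)^k) := by
      rw [hq, Finset.mul_sum]
      refine Finset.sum_congr rfl fun k _ => ?_
      rw [Matrix.mul_smul, hc]
      have := hcomm.mul_geom_sum₂ k
      rw [smul_pow, one_pow] at this
      rw [← this]
      congr 2
      refine Finset.sum_congr rfl fun i _ => ?_
      rw [smul_pow, one_pow, smul_mul_assoc, one_mul]
    rw [this]
    simp only [smul_sub, Finset.sum_sub_distrib, hCH, sub_zero, smul_smul]
    rw [← Finset.sum_smul]
    congr 1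
    exact (Polynomial.as_sum_range_C_mul_X_pow' _ hdeg).symm
  have h2 : u.charpoly • q = u.charpoly • adjugate (charmatrix u) := by
    have := congrArg (fun w => adjugate (charmatrix u) * w) h1
    simp only [← mul_assoc, Matrix.adjugate_mul, Matrix.mul_smul, mul_one] at this
    rw [← this]
    simp [Matrix.charpoly]
  have h0 : u.charpoly ≠ 0 := u.charpoly_monic.ne_zero
  exact (smul_right_injective _ h0 h2).symm

theorem newton {A : Type*} [CommRing A] [IsDomain A] {n : ℕ}
    (u : Matrix (Fin n) (Fin n) A) (j : ℕ) :
    (j + 1) * u.charpoly.coeff (j+1) = ∑ k ∈ Finset.range (n+1),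
      if j < k then u.charpoly.coeff k * (u^(k-1-j)).trace else 0 := by
  have hmap : ∀ k, (u.map (Polynomial.C : A →+* Polynomial A))^k = (u^k).map Polynomial.C := by
    intro k
    exact (map_pow (RingHom.mapMatrix (m := Fin n) (Polynomial.C : A →+* Polynomial A)) u k).symm
  have h := congrArg (fun p => Polynomial.coeff p j) (derivative_charpoly u)
  simp only [Polynomial.coeff_derivative] at h
  rw [mul_comm, h, adj_formula]
  have htr : ∀ w : Matrix (Fin n) (Fin n) A, (w.map (Polynomial.C : A →+* Polynomial A)).trace
    = Polynomial.C w.trace := by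
    intro w; simp [Matrix.trace]
  simp only [Matrix.trace_sum, Matrix.trace_smul, hmap, htr, Polynomial.finsetSum_coeff,
    smul_eq_mul, Polynomial.coeff_C_mul]
  refine Finset.sum_congr rfl fun k _ => ?_
  simp only [Polynomial.coeff_mul_C, Polynomial.coeff_X_pow, ite_mul, one_mul, zero_mul]
  rw [Finset.sum_ite_eq]
  simp

theorem coeff_mem {F A : Type*} [Field F] [CharZero F] [CommRing A] [IsDomain A] [Algebra F A]
    {n : ℕ} (hn : 0 < n) (u : Matrix (Fin n) (Fin n) A) (S : Subalgebra F A)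
    (hS : ∀ k, (u^k).trace ∈ S) (j : ℕ) : u.charpoly.coeff j ∈ S := by
  have hdeg : u.charpoly.natDegree = n := by
    have : Nonempty (Fin n) := ⟨⟨0, hn⟩⟩
    have : Nontrivial A := inferInstance
    simp
  have hdiv : ∀ (c : F) (a : A), c ≠ 0 → c • a ∈ S → a ∈ S := by
    intro c a hc h
    have := S.smul_mem h c⁻¹
    rwa [smul_smul, inv_mul_cancel₀ hc, one_smul] at this
  induction hd : n - j using Nat.strong_induction_on generalizing j with
  | _ d ih =>
  have ih' : ∀ k, j < k → j < n → u.charpoly.coeff k ∈ S := fun k hk hjn =>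
    ih (n - k) (by omega) k rfl
  rcases lt_trichotomy n j with h | h | h
  · rw [Polynomial.coeff_eq_zero_of_natDegree_lt (by omega)]; exact S.zero_mem
  · have := u.charpoly_monic.coeff_natDegree
    rw [hdeg] at this
    rw [← h, this]; exact S.one_mem
  · have hmain : ∑ k ∈ (Finset.range (n+1)), (if j < k then u.charpoly.coeff k * (u^(k-j)).trace else 0) ∈ S := by
      refine S.sum_mem fun k _ => ?_
      split_ifs with hk
      · exact S.mul_mem (ih' k hk h) (hS _)
      · exact S.zero_mem
    rcases j with _ | j
    · have := congrArg Matrix.trace (Matrix.aeval_self_charpoly u)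
      rw [Polynomial.aeval_eq_sum_range, hdeg, Finset.sum_range_succ', Matrix.trace_add] at this
      rw [Finset.sum_range_succ'] at hmain
      simp [Matrix.trace_sum] at this hmain
      refine hdiv (n : F) _ (by exact_mod_cast hn.ne') ?_
      rw [← neg_mem_iff]
      convert hmain using 1
      rw [eq_neg_of_add_eq_zero_left this, Algebra.smul_def]
      simp [mul_comm]
    · have hN := newton u j
      rw [← Finset.add_sum_erase _ _ (Finset.mem_range.mpr (show j + 1 < n+1 by omega))] at hN
      rw [← Finset.add_sum_erase _ _ (Finset.mem_range.mpr (show j + 1 < n+1 by omega))] at hmain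
      have he : ∑ k ∈ (Finset.range (n+1)).erase (j+1), (if j < k then u.charpoly.coeff k * (u^(k-1-j)).trace else 0)
       = ∑ k ∈ (Finset.range (n+1)).erase (j+1), (if j+1 < k then u.charpoly.coeff k * (u^(k-(j+1))).trace else 0) := by
        refine Finset.sum_congr rfl fun k hk => ?_
        have := Finset.ne_of_mem_erase hk
        rw [show k - 1 - j = k - (j+1) by omega]
        by_cases hjk : j < k
        · rw [if_pos hjk, if_pos (by omega)]
        · rw [if_neg hjk, if_neg (by omega)]
      rw [he] at hN
      simp at hN hmain
      refine hdiv ((j + 1 : F) - n) _ ?_ ?_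
      · rw [sub_ne_zero]; norm_cast; omega
      · convert hmain using 1
        rw [Algebra.smul_def]
        simp only [map_sub, map_add, map_natCast, map_one]
        rw [sub_mul, hN]; ring

/-- The Capelli-type alternating map. -/
noncomputable def capelli {A : Type*} [CommRing A] {n : ℕ} (N : ℕ)
    (y y' : Fin N → Matrix (Fin n) (Fin n) A) :
    (Matrix (Fin n) (Fin n) A) [⋀^Fin N]→ₗ[A] (Matrix (Fin n) (Fin n) A) :=
  MultilinearMap.alternatization
    ((MultilinearMap.mkPiAlgebraFin A N (Matrix (Fin n) (Fin n) A)).compLinearMap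
      (fun i => (LinearMap.mulRight A (y' i)).comp (LinearMap.mulLeft A (y i))))

theorem capelli_apply {A : Type*} [CommRing A] {n : ℕ} (N : ℕ)
    (y y' x : Fin N → Matrix (Fin n) (Fin n) A) :
    capelli N y y' x = ∑ s : Equiv.Perm (Fin N), (Equiv.Perm.sign s : ℤ) •
      (List.ofFn fun i => y i * x (s i) * y' i).prod := by
  simp [capelli, MultilinearMap.alternatization_apply, Units.smul_def]

theorem capelli_map {A B : Type*} [CommRing A] [CommRing B] (φ : A →+* B) {n : ℕ} (N : ℕ)
    (y y' x : Fin N → Matrix (Fin n) (Fin n) A) :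
    φ.mapMatrix (capelli N y y' x) = capelli N (fun i => φ.mapMatrix (y i))
      (fun i => φ.mapMatrix (y' i)) (fun i => φ.mapMatrix (x i)) := by
  simp only [capelli_apply, map_sum, map_zsmul, map_list_prod, List.map_ofFn]
  refine Finset.sum_congr rfl fun s _ => ?_
  congr 3
  funext i
  simp only [Function.comp, map_mul]

theorem capelli_mem {F A : Type*} [Field F] [CommRing A] [Algebra F A] {n : ℕ} (N : ℕ)
    (R : Subalgebra F (Matrix (Fin n) (Fin n) A))
    (y y' x : Fin N → Matrix (Fin n) (Fin n) A) (hy : ∀ i, y i ∈ R) (hy' : ∀ i, y' i ∈ R)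
    (hx : ∀ i, x i ∈ R) : capelli N y y' x ∈ R := by
  rw [capelli_apply]
  refine R.sum_mem fun s _ => R.zsmul_mem (R.list_prod_mem ?_) _
  intro w hw
  obtain ⟨i, rfl⟩ := (List.mem_ofFn' _ _).mp hw
  exact R.mul_mem (R.mul_mem (hy _) (hx _)) (hy' _)

theorem capelli_ne_zero {F : Type*} [Field F] {n N : ℕ} (hn : 0 < n)
    (e : Fin N ≃ Fin n × Fin n) :
    capelli N (fun k => Matrix.single (⟨0, hn⟩ : Fin n) (e k).1 (1 : F))
      (fun k => Matrix.single (e k).2 (⟨0, hn⟩ : Fin n) (1 : F))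
      (fun k => Matrix.single (e k).1 (e k).2 (1 : F)) ≠ 0 := by
  rw [capelli_apply, Finset.sum_eq_single 1]
  · simp only [Equiv.Perm.coe_one, id, Matrix.single_mul_single_same, mul_one]
    rw [List.ofFn_const, List.prod_replicate]
    have hp : ∀ k, (Matrix.single (⟨0, hn⟩ : Fin n) (⟨0, hn⟩ : Fin n) (1 : F) ^ k) ⟨0,hn⟩ ⟨0,hn⟩ = 1 := by
      intro k
      have : IsIdempotentElem (Matrix.single (⟨0, hn⟩ : Fin n) (⟨0, hn⟩ : Fin n) (1 : F)) := by
        simp [IsIdempotentElem]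
      rcases k with _ | k
      · simp
      · rw [this.pow_succ_eq]; simp
    intro h
    have := congrFun (congrFun h ⟨0, hn⟩) ⟨0, hn⟩
    simp [hp] at this
  · intro s _ hs
    obtain ⟨k, hk⟩ : ∃ k, s k ≠ k := by
      by_contra! h
      exact hs (Equiv.ext h)
    rw [List.prod_eq_zero, smul_zero]
    rw [List.mem_ofFn']
    refine ⟨k, ?_⟩
    have hne : e (s k) ≠ e k := fun h => hk (e.injective h)
    by_cases h1 : (e k).1 = (e (s k)).1
    · have h2 : (e (s k)).2 ≠ (e k).2 := fun h => hne (Prod.ext h1.symm h)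
      simp only [mul_assoc]
      rw [Matrix.single_mul_single_of_ne _ _ _ _ h2, mul_zero]
    · simp only
      rw [Matrix.single_mul_single_of_ne _ _ _ _ h1, zero_mul]
  · simp

theorem adjoin_top (F : Type*) [Field F] {n : ℕ} (hn : 0 < n)
    (S : Subalgebra F (Matrix (Fin n) (Fin n) F))
    (hS : Matrix.of (fun i j : Fin n => if (i : ℕ) + 1 = j then (1 : F) else 0) ∈ S)
    (hS2 : Matrix.of (fun i j : Fin n => if (j : ℕ) = 0 ∧ (i : ℕ) + 1 = n then (1:F) else 0) ∈ S) :
    S = ⊤ := by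
  set U := Matrix.of (fun i j : Fin n => if (i : ℕ) + 1 = j then (1 : F) else 0) with hU
  have hE : Matrix.of (fun i j : Fin n => if (j : ℕ) = 0 ∧ (i : ℕ) + 1 = n then (1:F) else 0)
      = Matrix.single ⟨n-1, by omega⟩ ⟨0, hn⟩ 1 := by
    ext i j
    simp only [Matrix.of_apply, Matrix.single_apply, Fin.ext_iff]
    congr 1
    apply propext
    omega
  rw [hE] at hS2
  have hleft : ∀ (i j : Fin n) (hi : (i : ℕ) + 1 < n), U * Matrix.single ⟨i + 1, hi⟩ j 1
      = Matrix.single i j (1 : F) := by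
    intro i j hi
    ext a b
    by_cases hb : b = j
    · subst hb
      simp [Matrix.single_apply, hU, Fin.ext_iff, eq_comm]
    · rw [Matrix.mul_single_apply_of_ne _ _ _ _ _ hb]
      simp [Matrix.single_apply, Ne.symm hb]
  have hright : ∀ (i j : Fin n) (hj : (j : ℕ) + 1 < n), Matrix.single i j 1 * U
      = Matrix.single i ⟨j + 1, hj⟩ (1 : F) := by
    intro i j hj
    ext a b
    by_cases hb : a = i
    · subst hb
      simp [Matrix.single_apply, hU, Fin.ext_iff]
    · rw [Matrix.single_mul_apply_of_ne _ _ _ _ _ hb]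
      simp [Matrix.single_apply, Ne.symm hb]
  have h1 : ∀ (d : ℕ) (i : Fin n), n - 1 - i = d → Matrix.single i ⟨0, hn⟩ (1 : F) ∈ S := by
    intro d
    induction d with
    | zero =>
      intro i hi
      have : i = ⟨n-1, by omega⟩ := Fin.ext (by have := i.2; simp only; omega)
      rw [this]; exact hS2
    | succ d ih =>
      intro i hi
      rw [← hleft i _ (by omega)]
      exact S.mul_mem hS (ih _ (by simp only; omega))
  have h2 : ∀ (d : ℕ) (hd : d < n) (i : Fin n), Matrix.single i ⟨d, hd⟩ (1 : F) ∈ S := by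
    intro d
    induction d with
    | zero => intro hd i; exact h1 _ i rfl
    | succ d ih =>
      intro hd i
      rw [← hright i ⟨d, by omega⟩ hd]
      exact S.mul_mem (ih _ _) hS
  rw [eq_top_iff]
  intro w _
  rw [Matrix.matrix_eq_sum_single w]
  refine S.sum_mem fun i _ => S.sum_mem fun j _ => ?_
  have := S.smul_mem (h2 j j.2 i) (w i j)
  rwa [Matrix.smul_single, smul_eq_mul, mul_one] at this

/-- The conductor ideal: span of values of alternating maps in `n²` variables preserving `R`. -/
def condIdeal {F A : Type*} [Field F] [CommRing A] [Algebra F A] {n : ℕ}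
    (R : Subalgebra F (Matrix (Fin n) (Fin n) A)) : Submodule F (Matrix (Fin n) (Fin n) A) :=
  Submodule.span F {w | ∃ f : (Matrix (Fin n) (Fin n) A) [⋀^Fin (n * n)]→ₗ[A]
    (Matrix (Fin n) (Fin n) A), (∀ x, (∀ i, x i ∈ R) → f x ∈ R) ∧
      ∃ x, (∀ i, x i ∈ R) ∧ w = f x}

section
variable {F A : Type*} [Field F] [CommRing A] [Algebra F A] {n : ℕ}
    (R : Subalgebra F (Matrix (Fin n) (Fin n) A))

theorem condIdeal_le {w} (hw : w ∈ condIdeal R) : w ∈ R := by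
  have : condIdeal R ≤ Subalgebra.toSubmodule R := by
    refine Submodule.span_le.mpr ?_
    rintro _ ⟨f, hf, x, hx, rfl⟩
    exact hf x hx
  exact this hw

theorem condIdeal_mul_left {w r} (hw : w ∈ condIdeal R) (hr : r ∈ R) : r * w ∈ condIdeal R := by
  have : condIdeal R ≤ (condIdeal R).comap (LinearMap.mulLeft F r) := by
    refine Submodule.span_le.mpr ?_
    rintro _ ⟨f, hf, x, hx, rfl⟩
    refine Submodule.subset_span ⟨(LinearMap.mulLeft A r).compAlternatingMap f, ?_, x, hx, rfl⟩
    intro x hx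
    exact R.mul_mem hr (hf x hx)
  exact this hw

theorem condIdeal_mul_right {w r} (hw : w ∈ condIdeal R) (hr : r ∈ R) : w * r ∈ condIdeal R := by
  have : condIdeal R ≤ (condIdeal R).comap (LinearMap.mulRight F r) := by
    refine Submodule.span_le.mpr ?_
    rintro _ ⟨f, hf, x, hx, rfl⟩
    refine Submodule.subset_span ⟨(LinearMap.mulRight A r).compAlternatingMap f, ?_, x, hx, rfl⟩
    intro x hx
    exact R.mul_mem (hf x hx) hr
  exact this hw

/-- The scalars stabilizing the conductor ideal. -/
def condStab : Subalgebra F A where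
  carrier := {a | ∀ w ∈ condIdeal R, a • w ∈ condIdeal R}
  mul_mem' := by
    intro a b ha hb w hw
    rw [mul_smul]; exact ha _ (hb _ hw)
  add_mem' := by
    intro a b ha hb w hw
    rw [add_smul]; exact (condIdeal R).add_mem (ha _ hw) (hb _ hw)
  algebraMap_mem' := by
    intro c w hw
    rw [algebraMap_smul]; exact (condIdeal R).smul_mem c hw

theorem trace_mem_condStab [CharZero F] (hn : 0 < n) {z} (hz : z ∈ R) :
    z.trace ∈ condStab R := by
  intro w hw
  have : condIdeal R ≤ (condIdeal R).comap (LinearMap.lsmul A (Matrix (Fin n) (Fin n) A) z.trace |>.restrictScalars F) := by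
    refine Submodule.span_le.mpr ?_
    rintro _ ⟨f, hf, x, hx, rfl⟩
    have key := alt_trace ((Matrix.stdBasis A (Fin n) (Fin n)).reindex finProdFinEquiv) f
      (LinearMap.mulLeft A z) x
    have hs : ∑ i, ((Matrix.stdBasis A (Fin n) (Fin n)).reindex finProdFinEquiv).repr
        (LinearMap.mulLeft A z ((Matrix.stdBasis A (Fin n) (Fin n)).reindex finProdFinEquiv i)) i
        = n * z.trace := by
      rw [← trace_coords, ← Equiv.sum_comp finProdFinEquiv]
      simp
    rw [hs] at key
    have h1 : ((n : A) * z.trace) • f x ∈ condIdeal R := by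
      rw [← key]
      refine Submodule.sum_mem _ fun i _ => Submodule.subset_span ⟨f, hf, _, ?_, rfl⟩
      intro k
      by_cases hk : k = i
      · subst hk; simpa using R.mul_mem hz (hx k)
      · simpa [hk] using hx k
    have h2 := (condIdeal R).smul_mem ((n : F)⁻¹) h1
    have h3 : ((n : F)⁻¹) • (((n : A) * z.trace) • f x) = z.trace • f x := by
      rw [mul_smul, Nat.cast_smul_eq_nsmul, ← Nat.cast_smul_eq_nsmul F, smul_smul,
        inv_mul_cancel₀ (by exact_mod_cast hn.ne'), one_smul]
    rw [h3] at h2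
    exact h2
  exact this hw
end

/-- **Razmyslov's conductor theorem.** For `char F = 0` and `n, m ≥ 2` the inclusion
`R_{n,m} ⊆ R_{n,m}·T_{n,m}` has a nonzero conductor: there is a nonzero additive subgroup
`I` contained in `R_{n,m}` that is simultaneously a two-sided ideal of `R_{n,m}` and a
two-sided ideal of `R_{n,m}·T_{n,m}`. -/
theorem razmyslov_conductor (F : Type) [Field F] [CharZero F]
    (n m : ℕ) (hn : 2 ≤ n) (hm : 2 ≤ m) :
    ∃ I : AddSubgroup (Matrix (Fin n) (Fin n) (MvPolynomial (Fin m × Fin n × Fin n) F)),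
      I ≠ ⊥ ∧
      (↑I : Set (Matrix (Fin n) (Fin n) (MvPolynomial (Fin m × Fin n × Fin n) F))) ⊆
        genericMatrixAlgebra F n m ∧
      (∀ x ∈ I, ∀ r ∈ genericMatrixAlgebra F n m, r * x ∈ I ∧ x * r ∈ I) ∧
      (∀ x ∈ I, ∀ r ∈ genericTraceMatrixAlgebra F n m, r * x ∈ I ∧ x * r ∈ I) := by
  have hn0 : 0 < n := by omega
  set R := genericMatrixAlgebra F n m with hR
  refine ⟨(condIdeal R).toAddSubgroup, ?_, fun w hw => condIdeal_le R hw,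
    fun x hx r hr => ⟨condIdeal_mul_left R hx hr, condIdeal_mul_right R hx hr⟩, ?_⟩
  · -- specialization
    let U : Matrix (Fin n) (Fin n) F := Matrix.of (fun i j => if (i : ℕ) + 1 = j then 1 else 0)
    let E : Matrix (Fin n) (Fin n) F :=
      Matrix.of (fun i j => if (j : ℕ) = 0 ∧ (i : ℕ) + 1 = n then 1 else 0)
    let φ : MvPolynomial (Fin m × Fin n × Fin n) F →ₐ[F] F :=
      MvPolynomial.aeval (fun p => if (p.1 : ℕ) = 0 then U p.2.1 p.2.2 else E p.2.1 p.2.2)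
    have htop : R.map φ.mapMatrix = ⊤ := by
      apply adjoin_top F hn0
      · refine ⟨genericMatrix F n m ⟨0, by omega⟩, Algebra.subset_adjoin ⟨_, rfl⟩, ?_⟩
        ext i j
        simp [genericMatrix, φ, U]
      · refine ⟨genericMatrix F n m ⟨1, by omega⟩, Algebra.subset_adjoin ⟨_, rfl⟩, ?_⟩
        ext i j
        simp [genericMatrix, φ, E]
    have hsurj : ∀ w : Matrix (Fin n) (Fin n) F, ∃ r ∈ R, φ.toRingHom.mapMatrix r = w := by
      intro w
      have : w ∈ R.map φ.mapMatrix := by rw [htop]; trivial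
      obtain ⟨r, hr, h⟩ := this
      exact ⟨r, hr, h⟩
    choose g hg hg2 using hsurj
    intro hbot
    let e : Fin (n * n) ≃ Fin n × Fin n := finProdFinEquiv.symm
    let y := fun k => Matrix.single (⟨0, hn0⟩ : Fin n) (e k).1 (1 : F)
    let y' := fun k => Matrix.single (e k).2 (⟨0, hn0⟩ : Fin n) (1 : F)
    let x := fun k => Matrix.single (e k).1 (e k).2 (1 : F)
    have hmem : capelli (n * n) (fun k => g (y k)) (fun k => g (y' k)) (fun k => g (x k))
        ∈ (condIdeal R).toAddSubgroup :=
      Submodule.subset_span ⟨_, fun z hz => capelli_mem _ R _ _ z (fun _ => hg _) (fun _ => hg _) hz,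
        _, fun _ => hg _, rfl⟩
    rw [hbot, AddSubgroup.mem_bot] at hmem
    have h := congrArg φ.toRingHom.mapMatrix hmem
    rw [capelli_map, map_zero] at h
    simp only [hg2] at h
    exact capelli_ne_zero hn0 e h
  · have hT : genericTraceRing F n m ≤ condStab R := by
      refine Algebra.adjoin_le ?_
      rintro _ ⟨u, hu, i, rfl⟩
      exact coeff_mem hn0 u _ (fun k => trace_mem_condStab R hn0 (R.pow_mem hu k)) i
    intro x hx r hr
    induction hr using Algebra.adjoin_induction generalizing x with
    | mem r hr =>
      rcases hr with hr | ⟨a, ha, rfl⟩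
      · exact ⟨condIdeal_mul_left R hx hr, condIdeal_mul_right R hx hr⟩
      · have := hT ha x hx
        rw [← Algebra.commutes, and_self, ← Algebra.smul_def]
        exact this
    | algebraMap c =>
      rw [← Algebra.commutes, and_self, ← Algebra.smul_def]
      exact (condIdeal R).smul_mem c hx
    | add r s _ _ h1 h2 =>
      rw [add_mul, mul_add]
      exact ⟨add_mem (h1 x hx).1 (h2 x hx).1, add_mem (h1 x hx).2 (h2 x hx).2⟩
    | mul r s _ _ h1 h2 =>
      rw [mul_assoc, ← mul_assoc x]
      exact ⟨(h1 _ (h2 x hx).1).1, (h2 _ (h1 x hx).2).2⟩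
end

section
/- Let F be a field of characteristic 0, let i_1, …, i_m ≥ 1 and let N = i_1 + ⋯ + i_m. Let UT(i_1, …, i_m) ⊆ M_N(F) be the algebra of block upper triangular matrices with diagonal blocks of sizes i_1, …, i_m. Then the T-ideal of polynomial identities of UT(i_1, …, i_m) equals the product Γ_{i_1} Γ_{i_2} ⋯ Γ_{i_m} of the T-ideals of identities of the matrix algebras M_{i_1}(F), …, M_{i_m}(F), the product being taken as two-sided ideals of the free algebra F⟨x_1, x_2, …⟩. (Theorem of Giambruno–Zaicev.) -/
/-- The set of polynomial identities of the subset `U` of the `F`-algebra `S` — those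
elements of the free associative algebra on countably many noncommuting variables all of
whose evaluations at elements of `U` vanish — viewed as an `F`-submodule of the free
algebra.  (When `U` is a (sub)algebra this is its T-ideal of identities; products below are
taken as two-sided ideals, i.e. additive spans of products.) -/
def identityIdeal (F : Type) [Field F] (S : Type) [Ring S] [Algebra F S] (U : Set S) :
    Submodule F (FreeAlgebra F ℕ) where
  carrier := {f | ∀ a : ℕ → S, (∀ k, a k ∈ U) → (FreeAlgebra.lift F a) f = 0}
  add_mem' := by
    intro f g hf hg a ha
    rw [map_add, hf a ha, hg a ha, add_zero]
  zero_mem' := by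
    intro a ha
    rw [map_zero]
  smul_mem' := by
    intro c f hf a ha
    rw [map_smul, hf a ha, smul_zero]

namespace GZ

open TensorProduct

/-- The algebra map whose `(0,1)` entry is the `k`-th part of the universal derivation. -/
noncomputable def dmat (F : Type) [Field F] (k : ℕ) :
    FreeAlgebra F ℕ →ₐ[F] Matrix (Fin 2) (Fin 2) (FreeAlgebra F ℕ ⊗[F] FreeAlgebra F ℕ) :=
  FreeAlgebra.lift F fun l =>
    !![FreeAlgebra.ι F l ⊗ₜ[F] 1, if l = k then 1 else 0; 0, 1 ⊗ₜ[F] FreeAlgebra.ι F l]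

/-- The `k`-th part of the universal derivation. -/
noncomputable def del (F : Type) [Field F] (k : ℕ) (f : FreeAlgebra F ℕ) :
    FreeAlgebra F ℕ ⊗[F] FreeAlgebra F ℕ := dmat F k f 0 1

section
variable {F : Type} [Field F]

theorem dmat_diag (k : ℕ) (f : FreeAlgebra F ℕ) :
    dmat F k f 0 0 = f ⊗ₜ[F] 1 ∧ dmat F k f 1 1 = 1 ⊗ₜ[F] f ∧ dmat F k f 1 0 = 0 := by
  induction f using FreeAlgebra.induction with
  | grade0 r =>
    rw [AlgHom.commutes]
    refine ⟨?_, ?_, ?_⟩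
    · rw [Matrix.algebraMap_matrix_apply, if_pos rfl]; rfl
    · rw [Matrix.algebraMap_matrix_apply, if_pos rfl, Algebra.TensorProduct.algebraMap_apply']
    · rw [Matrix.algebraMap_matrix_apply, if_neg (by decide)]
  | grade1 l => simp [dmat]
  | mul a b ha hb =>
    obtain ⟨h1, h2, h3⟩ := ha
    obtain ⟨h1', h2', h3'⟩ := hb
    simp [Matrix.mul_apply, Fin.sum_univ_two, h1, h2, h3, h1', h2', h3']
  | add a b ha hb =>
    obtain ⟨h1, h2, h3⟩ := ha
    obtain ⟨h1', h2', h3'⟩ := hb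
    simp [h1, h2, h3, h1', h2', h3', add_tmul, tmul_add]

theorem del_add (k : ℕ) (f g : FreeAlgebra F ℕ) : del F k (f + g) = del F k f + del F k g := by
  simp [del]

theorem del_algebraMap (k : ℕ) (r : F) : del F k (algebraMap F _ r) = 0 := by
  unfold del
  rw [AlgHom.commutes, Matrix.algebraMap_matrix_apply, if_neg (by decide)]

theorem del_ι (k l : ℕ) : del F k (FreeAlgebra.ι F l) = if l = k then 1 else 0 := by
  simp [del, dmat]

theorem del_mul (k : ℕ) (f g : FreeAlgebra F ℕ) :
    del F k (f * g) = (f ⊗ₜ[F] 1) * del F k g + del F k f * (1 ⊗ₜ[F] g) := by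
  simp [del, Matrix.mul_apply, Fin.sum_univ_two, dmat_diag]

/-- The boundary map. -/
noncomputable def bd (F : Type) [Field F] (k : ℕ) :
    FreeAlgebra F ℕ ⊗[F] FreeAlgebra F ℕ →ₗ[F] FreeAlgebra F ℕ ⊗[F] FreeAlgebra F ℕ :=
  LinearMap.mulRight F (FreeAlgebra.ι F k ⊗ₜ[F] 1) -
    LinearMap.mulLeft F (1 ⊗ₜ[F] FreeAlgebra.ι F k)

theorem bd_apply (k : ℕ) (t : FreeAlgebra F ℕ ⊗[F] FreeAlgebra F ℕ) :
    bd F k t = t * (FreeAlgebra.ι F k ⊗ₜ[F] 1) - (1 ⊗ₜ[F] FreeAlgebra.ι F k) * t := rfl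

theorem bd_tmul (k : ℕ) (a b : FreeAlgebra F ℕ) :
    bd F k (a ⊗ₜ b) = (a * FreeAlgebra.ι F k) ⊗ₜ b - a ⊗ₜ (FreeAlgebra.ι F k * b) := by
  simp [bd_apply]

theorem bd_left (k : ℕ) (f : FreeAlgebra F ℕ) (t : FreeAlgebra F ℕ ⊗[F] FreeAlgebra F ℕ) :
    bd F k ((f ⊗ₜ[F] 1) * t) = (f ⊗ₜ[F] 1) * bd F k t := by
  simp only [bd_apply, mul_sub, ← mul_assoc]
  simp

theorem bd_right (k : ℕ) (f : FreeAlgebra F ℕ) (t : FreeAlgebra F ℕ ⊗[F] FreeAlgebra F ℕ) :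
    bd F k (t * (1 ⊗ₜ[F] f)) = bd F k t * (1 ⊗ₜ[F] f) := by
  simp only [bd_apply, sub_mul, mul_assoc]
  simp

theorem bd_sum (f : FreeAlgebra F ℕ) : ∃ s : Finset ℕ, ∀ sB, s ⊆ sB →
    ∑ k ∈ sB, bd F k (del F k f) = f ⊗ₜ[F] 1 - 1 ⊗ₜ[F] f := by
  induction f using FreeAlgebra.induction with
  | grade0 r =>
    refine ⟨∅, fun sB _ => ?_⟩
    simp [del_algebraMap, ← Algebra.TensorProduct.algebraMap_apply']
  | grade1 l =>
    refine ⟨{l}, fun sB hs => ?_⟩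
    have : l ∈ sB := by simpa using hs
    rw [Finset.sum_eq_single_of_mem l this]
    · simp [del_ι, bd_apply]
    · intro k _ hk
      simp [del_ι, hk.symm]
  | mul a b ha hb =>
    obtain ⟨s, hs⟩ := ha
    obtain ⟨t, ht⟩ := hb
    refine ⟨s ∪ t, fun sB h => ?_⟩
    have h1 := hs sB (Finset.union_subset_left h)
    have h2 := ht sB (Finset.union_subset_right h)
    simp only [del_mul, map_add, bd_left, bd_right, Finset.sum_add_distrib, ← Finset.mul_sum,
      ← Finset.sum_mul, h1, h2]
    simp [mul_sub, sub_mul]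
  | add a b ha hb =>
    obtain ⟨s, hs⟩ := ha
    obtain ⟨t, ht⟩ := hb
    refine ⟨s ∪ t, fun sB h => ?_⟩
    have h1 := hs sB (Finset.union_subset_left h)
    have h2 := ht sB (Finset.union_subset_right h)
    simp only [del_add, map_add, Finset.sum_add_distrib, h1, h2, add_tmul, tmul_add]
    abel

theorem exists_proj {A : Type} [AddCommGroup A] [Module F A] (I : Submodule F A) :
    ∃ p : A →ₗ[F] A, (∀ x, p x ∈ I) ∧ ∀ x ∈ I, p x = x := by
  obtain ⟨g, hg⟩ := I.subtype.exists_leftInverse_of_injective I.ker_subtype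
  refine ⟨I.subtype ∘ₗ g, fun x => (g x).2, fun x hx => ?_⟩
  have := LinearMap.congr_fun hg ⟨x, hx⟩
  simp at this
  simp [this]

/-- Separation of points in a tensor product by functionals on the right factor. -/
theorem tensor_sep {A : Type} [AddCommGroup A] [Module F A] (t : A ⊗[F] A)
    (h : ∀ χ : A →ₗ[F] F, LinearMap.lTensor A χ t = 0) : t = 0 := by
  classical
  let b := Module.Basis.ofVectorSpace F A
  apply (TensorProduct.equivFinsuppOfBasisRight (M := A) b).injective
  rw [map_zero]
  ext j
  have := congrArg (TensorProduct.rid F A) (h (b.coord j))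
  rw [map_zero] at this
  rw [Finsupp.zero_apply, ← this]
  clear this h
  induction t using TensorProduct.induction_on with
  | zero => simp
  | tmul x y => simp [TensorProduct.equivFinsuppOfBasisRight_apply_tmul_apply]
  | add x y hx hy => simp only [map_add, Finsupp.add_apply, hx, hy]

/-- Lewin-type lemma. -/
theorem lewin (I J : Submodule F (FreeAlgebra F ℕ))
    (hI : ∀ f ∈ I, ∀ g, f * g ∈ I) (hJ : ∀ f ∈ J, ∀ g, g * f ∈ J)
    (p q : FreeAlgebra F ℕ →ₗ[F] FreeAlgebra F ℕ)
    (hp : ∀ x, p x ∈ I) (hp' : ∀ x ∈ I, p x = x)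
    (hq : ∀ x, q x ∈ J) (hq' : ∀ x ∈ J, q x = x)
    (f : FreeAlgebra F ℕ) (hfI : f ∈ I) (hfJ : f ∈ J)
    (h : ∀ k, TensorProduct.map (LinearMap.id - p) (LinearMap.id - q) (del F k f) = 0) :
    f ∈ I * J := by
  obtain ⟨s, hs⟩ := bd_sum f
  have hs := hs s subset_rfl
  set u := fun k => TensorProduct.map p LinearMap.id (del F k f) with hu
  set v := fun k => TensorProduct.map (LinearMap.id - p) q (del F k f) with hv
  have huv : ∀ k, del F k f = u k + v k := by
    intro k
    have key : ∀ t, t = TensorProduct.map p LinearMap.id t +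
        TensorProduct.map (LinearMap.id - p) q t +
        TensorProduct.map (LinearMap.id - p) (LinearMap.id - q) t := by
      intro t
      induction t using TensorProduct.induction_on with
      | zero => simp
      | tmul x y => simp [sub_tmul, tmul_sub]
      | add x y hx hy =>
        conv_lhs => rw [hx, hy]
        simp only [map_add]
        abel
    have h2 := key (del F k f)
    rwa [h k, add_zero] at h2
  have e1 : ∀ k t, TensorProduct.map p LinearMap.id (bd F k (TensorProduct.map p LinearMap.id t))
      = bd F k (TensorProduct.map p LinearMap.id t) := by
    intro k t
    induction t using TensorProduct.induction_on with
    | zero => simp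
    | tmul x y =>
      simp only [map_tmul, bd_tmul, map_sub, LinearMap.id_apply]
      rw [hp' _ (hI _ (hp x) _), hp' _ (hp x)]
    | add x y hx hy => simp only [map_add, hx, hy]
  have e2 : ∀ k t, TensorProduct.map LinearMap.id q
      (bd F k (TensorProduct.map (LinearMap.id - p) q t))
      = bd F k (TensorProduct.map (LinearMap.id - p) q t) := by
    intro k t
    induction t using TensorProduct.induction_on with
    | zero => simp
    | tmul x y =>
      simp only [map_tmul, bd_tmul, map_sub, LinearMap.id_apply]
      rw [hq' _ (hJ _ (hq y) _), hq' _ (hq y)]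
    | add x y hx hy => simp only [map_add, hx, hy]
  set w := f ⊗ₜ[F] (1 : FreeAlgebra F ℕ) - ∑ k ∈ s, bd F k (u k) with hw
  have hw2 : w = 1 ⊗ₜ[F] f + ∑ k ∈ s, bd F k (v k) := by
    simp only [huv, map_add, Finset.sum_add_distrib] at hs
    rw [hw, sub_eq_iff_eq_add]
    rw [eq_comm, sub_eq_iff_eq_add] at hs
    rw [hs]; abel
  have w1 : TensorProduct.map p LinearMap.id w = w := by
    rw [hw]
    simp only [map_sub, map_sum, map_tmul, hu, e1, hp' f hfI, LinearMap.id_apply]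
  have w2 : TensorProduct.map LinearMap.id q w = w := by
    rw [hw2]
    simp only [map_add, map_sum, map_tmul, hv, e2, hq' f hfJ, LinearMap.id_apply]
  have w3 : TensorProduct.map p q w = w := by
    conv_rhs => rw [← w1, ← w2]
    rw [← LinearMap.comp_apply, ← TensorProduct.map_comp]
    simp
  have m1 : ∀ t, LinearMap.mul' F (FreeAlgebra F ℕ) (TensorProduct.map p q t) ∈ I * J := by
    intro t
    induction t using TensorProduct.induction_on with
    | zero => simp
    | tmul x y =>
      simp only [map_tmul, LinearMap.mul'_apply]
      exact Submodule.mul_mem_mul (hp x) (hq y)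
    | add x y hx hy => simp only [map_add]; exact add_mem hx hy
  have m2 : ∀ k t, LinearMap.mul' F (FreeAlgebra F ℕ) (bd F k t) = 0 := by
    intro k t
    induction t using TensorProduct.induction_on with
    | zero => simp
    | tmul x y => simp [bd_tmul, mul_assoc]
    | add x y hx hy => simp only [map_add, hx, hy, add_zero]
  have m3 : LinearMap.mul' F (FreeAlgebra F ℕ) w = f := by
    rw [hw]
    simp [m2]
  rw [← m3, ← w3]
  exact m1 w

/-- Vanishing of all products of functionals from separating families. -/
theorem sep2 (I J : Submodule F (FreeAlgebra F ℕ))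
    (p q : FreeAlgebra F ℕ →ₗ[F] FreeAlgebra F ℕ)
    (hp : ∀ x, p x ∈ I) (hp' : ∀ x ∈ I, p x = x)
    (hq : ∀ x, q x ∈ J) (hq' : ∀ x ∈ J, q x = x)
    (Φ Ψ : Set (FreeAlgebra F ℕ →ₗ[F] F))
    (hΦ : ∀ x, x ∈ I ↔ ∀ φ ∈ Φ, φ x = 0) (hΨ : ∀ x, x ∈ J ↔ ∀ φ ∈ Ψ, φ x = 0)
    (t : FreeAlgebra F ℕ ⊗[F] FreeAlgebra F ℕ)
    (h : ∀ φ ∈ Φ, ∀ ψ ∈ Ψ, LinearMap.mul' F F (TensorProduct.map φ ψ t) = 0) :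
    TensorProduct.map (LinearMap.id - p) (LinearMap.id - q) t = 0 := by
  apply tensor_sep
  intro χ
  -- left contraction
  have step1 : ∀ φ ∈ Φ, (LinearMap.id - q : FreeAlgebra F ℕ →ₗ[F] FreeAlgebra F ℕ)
      (TensorProduct.lid F _ (LinearMap.rTensor _ φ t)) = 0 := by
    intro φ hφ
    have : TensorProduct.lid F _ (LinearMap.rTensor (FreeAlgebra F ℕ) φ t) ∈ J := by
      rw [hΨ]
      intro ψ hψ
      rw [← h φ hφ ψ hψ]
      generalize t = t
      induction t using TensorProduct.induction_on with
      | zero => simp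
      | tmul x y => simp
      | add x y hx hy => simp only [map_add, hx, hy]
    simp [hq' _ this]
  have hφp : ∀ φ ∈ Φ, ∀ x, φ (p x) = 0 := fun φ hφ x => (hΦ _).1 (hp x) φ hφ
  apply (TensorProduct.rid F (FreeAlgebra F ℕ)).injective
  rw [map_zero]
  set z := TensorProduct.rid F (FreeAlgebra F ℕ) (LinearMap.lTensor (FreeAlgebra F ℕ) χ
    (TensorProduct.map (LinearMap.id - p) (LinearMap.id - q) t)) with hz
  have z1 : (LinearMap.id - p : FreeAlgebra F ℕ →ₗ[F] FreeAlgebra F ℕ) z = z := by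
    rw [hz]
    generalize t = t
    induction t using TensorProduct.induction_on with
    | zero => simp
    | tmul x y => simp [hp' _ (hp x)]
    | add x y hx hy => simp only [map_add, hx, hy]
  have z2 : z ∈ I := by
    rw [hΦ]
    intro φ hφ
    have : φ z = χ ((LinearMap.id - q : FreeAlgebra F ℕ →ₗ[F] FreeAlgebra F ℕ)
        (TensorProduct.lid F _ (LinearMap.rTensor _ φ t))) := by
      rw [hz]
      generalize t = t
      induction t using TensorProduct.induction_on with
      | zero => simp
      | tmul x y =>
        simp [hφp φ hφ]
        ring
      | add x y hx hy => simp only [map_add, hx, hy]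
    rw [this, step1 φ hφ, map_zero]
  rw [← z1]
  simp [hp' _ z2]

/-- Matrix-entry functionals. -/
noncomputable def ent {P : Type} [Fintype P] [DecidableEq P] (a : ℕ → Matrix P P F) (x y : P) :
    FreeAlgebra F ℕ →ₗ[F] F :=
  Matrix.entryLinearMap F F x y ∘ₗ (FreeAlgebra.lift F a).toLinearMap

theorem ent_apply {P : Type} [Fintype P] [DecidableEq P] (a : ℕ → Matrix P P F) (x y : P)
    (f : FreeAlgebra F ℕ) : ent a x y f = FreeAlgebra.lift F a f x y := rfl

variable {P Q : Type} [Fintype P] [DecidableEq P] [Fintype Q] [DecidableEq Q]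

theorem lift_blocks (c : ℕ → Matrix (P ⊕ Q) (P ⊕ Q) F) (hc : ∀ l, (c l).toBlocks₂₁ = 0)
    (f : FreeAlgebra F ℕ) :
    (FreeAlgebra.lift F c f).toBlocks₁₁ = FreeAlgebra.lift F (fun l => (c l).toBlocks₁₁) f ∧
    (FreeAlgebra.lift F c f).toBlocks₂₁ = 0 ∧
    (FreeAlgebra.lift F c f).toBlocks₂₂ = FreeAlgebra.lift F (fun l => (c l).toBlocks₂₂) f := by
  induction f using FreeAlgebra.induction with
  | grade0 r =>
    simp only [AlgHom.commutes]
    refine ⟨?_, ?_, ?_⟩ <;> ext x y <;>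
      simp [Matrix.toBlocks₁₁, Matrix.toBlocks₂₁, Matrix.toBlocks₂₂,
        Matrix.algebraMap_matrix_apply]
  | grade1 l => simp [hc]
  | mul a b ha hb =>
    obtain ⟨h1, h2, h3⟩ := ha
    obtain ⟨h1', h2', h3'⟩ := hb
    rw [map_mul, map_mul, map_mul, ← h1, ← h3, ← h1', ← h3']
    rw [← Matrix.fromBlocks_toBlocks (FreeAlgebra.lift F c a),
      ← Matrix.fromBlocks_toBlocks (FreeAlgebra.lift F c b), h2, h2', Matrix.fromBlocks_multiply]
    simp
  | add a b ha hb =>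
    obtain ⟨h1, h2, h3⟩ := ha
    obtain ⟨h1', h2', h3'⟩ := hb
    rw [map_add, map_add, map_add, ← h1, ← h3, ← h1', ← h3']
    refine ⟨rfl, ?_, rfl⟩
    ext x y
    have e1 := congrFun (congrFun h2 x) y
    have e2 := congrFun (congrFun h2' x) y
    simp only [Matrix.toBlocks₂₁, Matrix.of_apply, Matrix.zero_apply, Matrix.add_apply] at *
    rw [e1, e2, add_zero]

theorem lift_corner (a : ℕ → Matrix P P F) (b : ℕ → Matrix Q Q F) (k : ℕ) (pB : P) (qB : Q)
    (f : FreeAlgebra F ℕ) : ∀ (p : P) (q : Q),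
    FreeAlgebra.lift F (fun l => Matrix.fromBlocks (a l)
      (if l = k then Matrix.single pB qB 1 else 0) 0 (b l)) f (Sum.inl p) (Sum.inr q) =
    LinearMap.mul' F F (TensorProduct.map (ent a p pB) (ent b qB q) (del F k f)) := by
  set c := (fun l => Matrix.fromBlocks (a l)
      (if l = k then Matrix.single pB qB 1 else 0) 0 (b l)) with hc
  have hcb := lift_blocks c (by intro l; simp [hc])
  have c1 : ∀ f p r, FreeAlgebra.lift F c f (Sum.inl p) (Sum.inl r) = FreeAlgebra.lift F a f p r := by
    intro f p r
    have := congrFun (congrFun (hcb f).1 p) r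
    simp only [hc, Matrix.toBlocks_fromBlocks₁₁] at this
    exact this
  have c2 : ∀ f p r, FreeAlgebra.lift F c f (Sum.inr p) (Sum.inr r) = FreeAlgebra.lift F b f p r := by
    intro f p r
    have := congrFun (congrFun (hcb f).2.2 p) r
    simp only [hc, Matrix.toBlocks_fromBlocks₂₂] at this
    exact this
  induction f using FreeAlgebra.induction with
  | grade0 r =>
    intro p q
    rw [AlgHom.commutes, del_algebraMap]
    simp [Matrix.algebraMap_matrix_apply]
  | grade1 l =>
    intro p q
    rw [del_ι, FreeAlgebra.lift_ι_apply]
    by_cases hl : l = k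
    · simp [hc, hl, Algebra.TensorProduct.one_def, ent_apply, Matrix.single_apply,
        Matrix.one_apply, ite_and, eq_comm]
      split_ifs <;> rfl
    · simp [hc, hl]
  | mul f g hf hg =>
    intro p q
    rw [map_mul, Matrix.mul_apply, Fintype.sum_sum_type, del_mul, map_add, map_add]
    simp only [c1, c2, hf, hg]
    congr 1
    · generalize del F k g = t
      induction t using TensorProduct.induction_on with
      | zero => simp
      | tmul x y =>
        simp [ent_apply, Matrix.mul_apply, Finset.sum_mul, mul_assoc]
      | add x y hx hy => simp only [map_add, mul_add, Finset.sum_add_distrib, hx, hy]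
    · generalize del F k f = t
      induction t using TensorProduct.induction_on with
      | zero => simp
      | tmul x y =>
        simp [ent_apply, Matrix.mul_apply, Finset.mul_sum, mul_assoc]
      | add x y hx hy => simp only [map_add, add_mul, Finset.sum_add_distrib, hx, hy]
  | add f g hf hg =>
    intro p q
    rw [map_add, del_add, map_add, map_add, Matrix.add_apply, hf, hg]

theorem ideal_right {S : Type} [Ring S] [Algebra F S] (U : Set S) :
    ∀ f ∈ identityIdeal F S U, ∀ g, f * g ∈ identityIdeal F S U := by
  intro f hf g a ha
  rw [map_mul, hf a ha, zero_mul]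

theorem ideal_left {S : Type} [Ring S] [Algebra F S] (U : Set S) :
    ∀ f ∈ identityIdeal F S U, ∀ g, g * f ∈ identityIdeal F S U := by
  intro f hf g a ha
  rw [map_mul, hf a ha, mul_zero]

theorem mem_iff_ent (W : Set (Matrix Q Q F)) (f : FreeAlgebra F ℕ) :
    f ∈ identityIdeal F (Matrix Q Q F) W ↔
      ∀ φ ∈ {φ : FreeAlgebra F ℕ →ₗ[F] F | ∃ b : ℕ → Matrix Q Q F, (∀ l, b l ∈ W) ∧
        ∃ x y, φ = ent b x y}, φ f = 0 := by
  constructor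
  · rintro h φ ⟨b, hb, x, y, rfl⟩
    rw [ent_apply, h b hb]; rfl
  · intro h b hb
    ext x y
    exact h _ ⟨b, hb, x, y, rfl⟩

theorem step (W : Set (Matrix Q Q F)) (hW : (0 : Matrix Q Q F) ∈ W) :
    identityIdeal F (Matrix (P ⊕ Q) (P ⊕ Q) F) {x | x.toBlocks₂₁ = 0 ∧ x.toBlocks₂₂ ∈ W} =
      identityIdeal F (Matrix P P F) Set.univ * identityIdeal F (Matrix Q Q F) W := by
  apply le_antisymm
  · intro f hf
    obtain ⟨p, hp, hp'⟩ := exists_proj (identityIdeal F (Matrix P P F) Set.univ)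
    obtain ⟨q, hq, hq'⟩ := exists_proj (identityIdeal F (Matrix Q Q F) W)
    refine lewin _ _ (ideal_right _) (ideal_left _) p q hp hp' hq hq' f ?_ ?_ ?_
    · intro a _
      have hc : ∀ l, (fun l => Matrix.fromBlocks (a l) 0 0 (0 : Matrix Q Q F)) l ∈
          {x : Matrix (P ⊕ Q) (P ⊕ Q) F | x.toBlocks₂₁ = 0 ∧ x.toBlocks₂₂ ∈ W} := by
        intro l; simp [hW]
      have h1 := (lift_blocks _ (fun l => (hc l).1) f).1
      rw [hf _ hc] at h1
      simp only [Matrix.toBlocks_fromBlocks₁₁] at h1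
      exact h1.symm
    · intro b hb
      have hc : ∀ l, (fun l => Matrix.fromBlocks (0 : Matrix P P F) 0 0 (b l)) l ∈
          {x : Matrix (P ⊕ Q) (P ⊕ Q) F | x.toBlocks₂₁ = 0 ∧ x.toBlocks₂₂ ∈ W} := by
        intro l; simp [hb]
      have h1 := (lift_blocks _ (fun l => (hc l).1) f).2.2
      rw [hf _ hc] at h1
      simp only [Matrix.toBlocks_fromBlocks₂₂] at h1
      exact h1.symm
    · intro k
      refine sep2 _ _ p q hp hp' hq hq' _ _ (mem_iff_ent _) (mem_iff_ent _) _ ?_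
      rintro φ ⟨a, _, x, xB, rfl⟩ ψ ⟨b, hb, yB, y, rfl⟩
      rw [← lift_corner a b k xB yB f x y, hf]
      · rfl
      · intro l; simp [hb]
  · rw [Submodule.mul_le]
    intro f hf g hg c hc
    have h1 := lift_blocks c (fun l => (hc l).1) f
    have h2 := lift_blocks c (fun l => (hc l).1) g
    rw [hf _ (fun _ => Set.mem_univ _)] at h1
    rw [hg _ (fun l => (hc l).2)] at h2
    rw [map_mul, ← Matrix.fromBlocks_toBlocks (FreeAlgebra.lift F c f),
      ← Matrix.fromBlocks_toBlocks (FreeAlgebra.lift F c g), h1.1, h1.2.1, h2.2.1, h2.2.2,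
      Matrix.fromBlocks_multiply]
    simp

theorem transfer {S T : Type} [Ring S] [Algebra F S] [Ring T] [Algebra F T] (e : S ≃ₐ[F] T)
    (U : Set S) (V : Set T) (h : ∀ x, x ∈ U ↔ e x ∈ V) :
    identityIdeal F S U = identityIdeal F T V := by
  ext f
  constructor
  · intro hf a ha
    have h1 := hf (fun k => e.symm (a k)) (fun k => by rw [h]; simpa using ha k)
    have h2 : FreeAlgebra.lift F a = (e : S →ₐ[F] T).comp
        (FreeAlgebra.lift F (fun k => e.symm (a k))) := by
      ext k; simp
    rw [h2, AlgHom.comp_apply, h1, map_zero]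
  · intro hf a ha
    have h1 := hf (fun k => e (a k)) (fun k => (h _).1 (ha k))
    have h2 : FreeAlgebra.lift F (fun k => e (a k)) = (e : S →ₐ[F] T).comp
        (FreeAlgebra.lift F a) := by
      ext k; simp
    rw [h2, AlgHom.comp_apply] at h1
    exact e.injective (by rw [map_zero]; exact h1)

/-- Splitting off the first block of indices. -/
noncomputable def splitEquiv (m : ℕ) (i : Fin (m + 1) → ℕ) :
    (Fin (i 0) ⊕ ((j : Fin m) × Fin (i j.succ))) ≃ ((j : Fin (m + 1)) × Fin (i j)) :=
  Equiv.ofBijective (Sum.elim (fun x => ⟨0, x⟩) (fun y => ⟨y.1.succ, y.2⟩)) (by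
    constructor
    · rintro (x | ⟨j, x⟩) (y | ⟨k, y⟩) h
      · simpa using h
      · simp only [Sum.elim_inl, Sum.elim_inr, Sigma.mk.injEq] at h
        exact absurd h.1.symm (Fin.succ_ne_zero _)
      · simp only [Sum.elim_inl, Sum.elim_inr, Sigma.mk.injEq] at h
        exact absurd h.1 (Fin.succ_ne_zero _)
      · simp only [Sum.elim_inr, Sigma.mk.injEq, Fin.succ_inj] at h
        obtain ⟨rfl, h⟩ := h
        rw [eq_of_heq h]
    · rintro ⟨j, x⟩
      induction j using Fin.cases with
      | zero => exact ⟨Sum.inl x, rfl⟩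
      | succ j => exact ⟨Sum.inr ⟨j, x⟩, rfl⟩)

theorem ut_succ (m : ℕ) (i : Fin (m + 1) → ℕ) :
    identityIdeal F (Matrix ((j : Fin (m + 1)) × Fin (i j)) ((j : Fin (m + 1)) × Fin (i j)) F)
        {x | ∀ p q : (j : Fin (m + 1)) × Fin (i j), q.1 < p.1 → x p q = 0} =
      identityIdeal F (Matrix (Fin (i 0)) (Fin (i 0)) F) Set.univ *
      identityIdeal F (Matrix ((j : Fin m) × Fin (i j.succ)) ((j : Fin m) × Fin (i j.succ)) F)
        {x | ∀ p q : (j : Fin m) × Fin (i j.succ), q.1 < p.1 → x p q = 0} := by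
  rw [← step _ (by intro p q _; rfl)]
  apply transfer (Matrix.reindexAlgEquiv F F (splitEquiv m i).symm)
  intro x
  have e1 : ∀ y, splitEquiv m i (Sum.inl y) = ⟨0, y⟩ := fun _ => rfl
  have e2 : ∀ y, splitEquiv m i (Sum.inr y) = ⟨y.1.succ, y.2⟩ := fun _ => rfl
  simp only [Set.mem_ofPred_eq, Matrix.coe_reindexAlgEquiv, Matrix.reindex_apply, Equiv.symm_symm]
  constructor
  · intro h
    constructor
    · ext y z
      exact h _ _ (Fin.succ_pos _)
    · intro y z hyz
      exact h _ _ (Fin.succ_lt_succ_iff.2 hyz)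
  · rintro ⟨h1, h2⟩ p q hpq
    obtain ⟨p, rfl⟩ := (splitEquiv m i).surjective p
    obtain ⟨q, rfl⟩ := (splitEquiv m i).surjective q
    rcases p with p | p <;> rcases q with q | q
    · exact absurd hpq (lt_irrefl _)
    · exact absurd hpq (Fin.not_lt_zero _)
    · exact congrFun (congrFun h1 p) q
    · exact h2 p q (Fin.succ_lt_succ_iff.1 hpq)

theorem main (m : ℕ) : ∀ (i : Fin (m + 1) → ℕ),
    identityIdeal F (Matrix ((j : Fin (m + 1)) × Fin (i j)) ((j : Fin (m + 1)) × Fin (i j)) F)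
        {x | ∀ p q : (j : Fin (m + 1)) × Fin (i j), q.1 < p.1 → x p q = 0} =
      (List.ofFn fun j : Fin (m + 1) =>
        identityIdeal F (Matrix (Fin (i j)) (Fin (i j)) F) Set.univ).prod := by
  induction m with
  | zero =>
    intro i
    rw [ut_succ]
    simp only [List.ofFn_succ, List.ofFn_zero, List.prod_cons, List.prod_nil, mul_one]
    apply le_antisymm
    · rw [Submodule.mul_le]
      intro f hf g _
      exact ideal_right _ f hf g
    · intro f hf
      rw [← mul_one f]
      refine Submodule.mul_mem_mul hf ?_
      intro a _
      ext x
      exact x.1.elim0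
  | succ m ih =>
    intro i
    rw [ut_succ, ih (fun j => i j.succ), List.ofFn_succ (n := m + 1), List.prod_cons]

end

end GZ

/-- **Giambruno–Zaicev.** Over a field `F` of characteristic `0`, the T-ideal of identities
of the algebra `UT(i₁, …, i_m)` of block upper triangular matrices with diagonal blocks of
sizes `i₁, …, i_m` (indexed here by the sigma type `Σ j, Fin (i j)`, `q` being in a later
block than `p` meaning `q.1 > p.1`) is the product `Γ_{i₁} Γ_{i₂} ⋯ Γ_{i_m}` of the
T-ideals of identities of the matrix algebras `M_{i₁}(F), …, M_{i_m}(F)`. -/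
theorem giambruno_zaicev (F : Type) [Field F] [CharZero F]
    (m : ℕ) (hm : 1 ≤ m) (i : Fin m → ℕ) (hi : ∀ j, 1 ≤ i j) :
    identityIdeal F (Matrix ((j : Fin m) × Fin (i j)) ((j : Fin m) × Fin (i j)) F)
        {x | ∀ p q : (j : Fin m) × Fin (i j), q.1 < p.1 → x p q = 0} =
      (List.ofFn fun j : Fin m =>
        identityIdeal F (Matrix (Fin (i j)) (Fin (i j)) F) Set.univ).prod := by
  obtain ⟨n, rfl⟩ := Nat.exists_eq_add_of_le' hm
  exact GZ.main n i
end

section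
/- Let F be a field and let R be a finitely generated F-algebra satisfying a nonzero polynomial identity. Then for an element a ∈ R the following are equivalent: (1) a acts as zero in every finite-dimensional irreducible representation of R, i.e. for every finite-dimensional F-vector space V and every F-algebra homomorphism ρ : R → End_F(V) making V a simple R-module, ρ(a) = 0; (2) a belongs to the nil radical of R, i.e. the two-sided ideal of R generated by a is a nil ideal. (Nullstellensatz for finitely generated PI algebras.) -/
theorem pin_word {R : Type} [Ring R] (d l : ℕ) (i : Fin d → ℕ) (u : Fin l → ℕ) (r : Fin d → R) :
    ∑ T : Finset (Fin d), (-1 : ℤ) ^ T.card • ((List.ofFn u).map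
      (fun k => ∑ j, if j ∉ T ∧ i j = k then r j else 0)).prod
    = ∑ τ : Fin l → Fin d, if (Function.Surjective τ ∧ ∀ p, i (τ p) = u p) then
        (List.ofFn (fun p => r (τ p))).prod else 0 := by
  classical
  have h1 : ∀ T : Finset (Fin d), ((List.ofFn u).map
      (fun k => ∑ j, if j ∉ T ∧ i j = k then r j else 0)).prod
      = ∑ τ : Fin l → Fin d, if (∀ p, τ p ∉ T ∧ i (τ p) = u p) then
        (List.ofFn (fun p => r (τ p))).prod else 0 := by
    intro T
    have := MultilinearMap.map_sum (MultilinearMap.mkPiAlgebraFin ℤ l R)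
      (fun (p : Fin l) (j : Fin d) => if j ∉ T ∧ i j = u p then r j else 0)
    simp only [MultilinearMap.mkPiAlgebraFin_apply] at this
    rw [List.map_ofFn]
    refine this.trans (Finset.sum_congr rfl fun τ _ => ?_)
    split_ifs with h
    · congr 2; funext p; rw [if_pos (h p)]
    · push Not at h
      obtain ⟨p, hp⟩ := h
      apply List.prod_eq_zero
      rw [List.mem_ofFn]
      exact ⟨p, if_neg (fun h' => hp h'.1 h'.2)⟩
  simp_rw [h1, Finset.smul_sum]
  rw [Finset.sum_comm]
  refine Finset.sum_congr rfl fun τ _ => ?_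
  have h2 : ∀ T : Finset (Fin d), (-1 : ℤ) ^ T.card • (if (∀ p, τ p ∉ T ∧ i (τ p) = u p) then
        (List.ofFn (fun p => r (τ p))).prod else 0)
      = (if T ∈ ((Finset.univ.image τ)ᶜ).powerset then (-1 : ℤ) ^ T.card else 0) •
        (if (∀ p, i (τ p) = u p) then (List.ofFn (fun p => r (τ p))).prod else 0) := by
    intro T
    have : T ∈ ((Finset.univ.image τ)ᶜ).powerset ↔ ∀ p, τ p ∉ T := by
      rw [Finset.mem_powerset]
      constructor
      · intro h p hp
        have := h hp
        simp at this
      · intro h x hx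
        simp only [Finset.mem_compl, Finset.mem_image, Finset.mem_univ, true_and, not_exists]
        rintro p rfl
        exact h p hx
    simp only [forall_and, this]
    by_cases hA : ∀ p, τ p ∉ T <;>
    by_cases hB : ∀ p, i (τ p) = u p <;> simp [hA, hB]
  simp_rw [h2]
  rw [← Finset.sum_smul, Finset.sum_ite_mem, Finset.univ_inter, Finset.sum_powerset_neg_one_pow_card]
  have h3 : (Finset.univ.image τ)ᶜ = ∅ ↔ Function.Surjective τ := by
    rw [Finset.compl_eq_empty_iff]
    constructor
    · intro h x
      have hx : x ∈ Finset.univ.image τ := by rw [h]; simp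
      simpa using hx
    · exact Finset.image_univ_of_surjective
  by_cases hA : Function.Surjective τ <;>
    by_cases hB : ∀ p, i (τ p) = u p <;> simp [h3, hA, hB]

theorem pin_word2 {R : Type} [Ring R] (d : ℕ) (i : Fin d → ℕ) (w : List ℕ) (hw : w.length ≤ d)
    (r : Fin d → R) :
    ∑ T : Finset (Fin d), (-1 : ℤ) ^ T.card • (w.map
      (fun k => ∑ j, if j ∉ T ∧ i j = k then r j else 0)).prod
    = ∑ σ : Equiv.Perm (Fin d), if List.ofFn (fun p => i (σ p)) = w then
        (List.ofFn (fun p => r (σ p))).prod else 0 := by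
  classical
  obtain ⟨l, u, rfl⟩ : ∃ (l : ℕ) (u : Fin l → ℕ), w = List.ofFn u :=
    ⟨w.length, w.get, (List.ofFn_get w).symm⟩
  rw [pin_word]
  rw [List.length_ofFn] at hw
  rcases hw.lt_or_eq with hlt | rfl
  · rw [Finset.sum_eq_zero, Finset.sum_eq_zero]
    · intro σ _
      rw [if_neg]
      intro h
      have := congrArg List.length h
      simp at this; omega
    · intro τ _
      rw [if_neg]
      rintro ⟨h, -⟩
      have := Fintype.card_le_of_surjective τ h
      simp at this; omega
  · symm
    refine Finset.sum_of_injOn (fun σ : Equiv.Perm (Fin l) => (σ : Fin l → Fin l)) ?_ ?_ ?_ ?_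
    · intro a _ b _ h; exact Equiv.coe_fn_injective h
    · intro _ _; simp
    · intro τ _ hτ
      rw [if_neg]
      rintro ⟨h, -⟩
      apply hτ
      refine ⟨Equiv.ofBijective τ ((Finite.injective_iff_bijective).1 (Finite.injective_iff_surjective.2 h)), by simp, rfl⟩
    · intro σ _
      congr 1
      simp [List.ofFn_inj, funext_iff, σ.surjective]

theorem pin_multilin {F R : Type} [Field F] [Ring R] [Algebra F R]
    (hPI : ∃ f : FreeAlgebra F ℕ, f ≠ 0 ∧ ∀ a : ℕ → R, (FreeAlgebra.lift F a) f = 0) :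
    ∃ (d : ℕ) (c : Equiv.Perm (Fin d) → F), c 1 ≠ 0 ∧
      ∀ r : Fin d → R, ∑ σ, c σ • (List.ofFn (fun p => r (σ p))).prod = 0 := by
  classical
  obtain ⟨f, hf0, hf⟩ := hPI
  obtain ⟨g, rfl⟩ := (FreeAlgebra.equivMonoidAlgebraFreeMonoid (R := F) (X := ℕ)).symm.surjective f
  have hg0 : g ≠ 0 := by rintro rfl; simp at hf0
  have hev : ∀ a : ℕ → R, g.coeff.sum (fun w c => c • ((FreeMonoid.toList w).map a).prod) = 0 := by
    intro a
    rw [← hf a]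
    have : (FreeAlgebra.lift F a).comp (FreeAlgebra.equivMonoidAlgebraFreeMonoid (R := F) (X := ℕ)).symm.toAlgHom
       = MonoidAlgebra.lift F R (FreeMonoid ℕ) (FreeMonoid.lift a) := by
      apply MonoidAlgebra.algHom_ext'
      · apply FreeMonoid.hom_eq
        intro x
        simp [FreeAlgebra.equivMonoidAlgebraFreeMonoid]
      · exact Subsingleton.elim _ _
    have h2 := DFunLike.congr_fun this g
    simp only [AlgHom.comp_apply] at h2
    refine Eq.trans ?_ h2.symm
    rw [MonoidAlgebra.lift_apply]
    simp only [FreeMonoid.lift_apply]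
  have hg1 : g.coeff.support.Nonempty := by
    rw [Finsupp.support_nonempty_iff]
    simpa using hg0
  obtain ⟨w0, hw0, hmax⟩ := Finset.exists_max_image g.coeff.support
    (fun w => (FreeMonoid.toList w).length) hg1
  refine ⟨(FreeMonoid.toList w0).length, fun σ => g.coeff (FreeMonoid.ofList
    (List.ofFn (fun p => (FreeMonoid.toList w0).get (σ p)))), ?_, ?_⟩
  · have : List.ofFn (fun p => (FreeMonoid.toList w0).get ((1 : Equiv.Perm (Fin (FreeMonoid.toList w0).length)) p))
        = FreeMonoid.toList w0 := List.ofFn_get _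
    dsimp only
    rw [this]
    simpa using hw0
  · intro r
    have h1 : ∑ T : Finset (Fin _), (-1 : ℤ) ^ T.card • g.coeff.sum (fun w c => c •
      ((FreeMonoid.toList w).map (fun k => ∑ j, if j ∉ T ∧ (FreeMonoid.toList w0).get j = k
        then r j else 0)).prod) = 0 := by
      apply Finset.sum_eq_zero
      intro T _
      rw [hev, smul_zero]
    simp only [Finsupp.sum, Finset.smul_sum] at h1
    rw [Finset.sum_comm] at h1
    rw [← h1]
    have h2 : ∀ w ∈ g.coeff.support, (∑ T : Finset (Fin _), (-1 : ℤ) ^ T.card • (g.coeff w •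
      ((FreeMonoid.toList w).map (fun k => ∑ j, if j ∉ T ∧ (FreeMonoid.toList w0).get j = k
        then r j else 0)).prod)) = ∑ σ : Equiv.Perm (Fin _),
        if FreeMonoid.ofList (List.ofFn (fun p => (FreeMonoid.toList w0).get (σ p))) = w then
        g.coeff w • (List.ofFn (fun p => r (σ p))).prod else 0 := by
      intro w hw
      simp_rw [smul_comm _ (g.coeff w)]
      rw [← Finset.smul_sum, pin_word2 _ _ _ (hmax w hw), Finset.smul_sum]
      refine Finset.sum_congr rfl fun σ _ => ?_
      rw [smul_ite, smul_zero]
      exact if_congr Iff.rfl rfl rfl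
    rw [Finset.sum_congr rfl h2, Finset.sum_comm]
    refine Finset.sum_congr rfl fun σ _ => ?_
    rw [Finset.sum_ite_eq]
    split_ifs with h
    · rfl
    · dsimp only
      rw [Finsupp.notMem_support_iff.1 h, zero_smul]


theorem pin_vanish {K M N : Type} [Field K] [AddCommGroup M] [Module K M] [AddCommGroup N] [Module K N]
    {d : ℕ} (P : MultilinearMap K (fun _ : Fin d => M) N) (s : Set M)
    (h : ∀ g : Fin d → M, (∀ i, g i ∈ s) → P g = 0) (g : Fin d → M)
    (hg : ∀ i, g i ∈ Submodule.span K s) : P g = 0 := by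
  classical
  have key : ∀ t : Finset (Fin d), ∀ g : Fin d → M, (∀ i ∈ t, g i ∈ Submodule.span K s) →
      (∀ i ∉ t, g i ∈ s) → P g = 0 := by
    intro t
    induction t using Finset.induction_on with
    | empty => intro g _ h2; exact h g (fun i => h2 i (by simp))
    | insert i t hi ih =>
      intro g h1 h2
      have : ∀ x ∈ Submodule.span K s, P (Function.update g i x) = 0 := by
        intro x hx
        induction hx using Submodule.span_induction with
        | mem x hx =>
          apply ih
          · intro j hj
            rw [Function.update_of_ne (by rintro rfl; exact hi hj)]
            exact h1 j (Finset.mem_insert_of_mem hj)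
          · intro j hj
            by_cases hji : j = i
            · subst hji; simpa using hx
            · rw [Function.update_of_ne hji]
              exact h2 j (by simp [hji, hj])
        | zero => simp
        | add x y _ _ hx hy => rw [MultilinearMap.map_update_add, hx, hy, add_zero]
        | smul c x _ hx => rw [MultilinearMap.map_update_smul, hx, smul_zero]
      have h3 := this (g i) (h1 i (Finset.mem_insert_self _ _))
      rwa [Function.update_eq_self] at h3
  exact key Finset.univ g (fun i _ => hg i) (fun i hi => absurd (Finset.mem_univ i) hi)

theorem pin_finite {F R K V : Type} [Field F] [Ring R] [Algebra F R] [Field K] [Algebra F K]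
    [AddCommGroup V] [Module K V] (φ : R →+* Module.End K V)
    (hφ : ∀ c : F, φ (algebraMap F R c) = algebraMap F K c • 1)
    (dense : ∀ (f : Module.End K V) (s : Finset V),
      ∃ g ∈ Submodule.span K (Set.range φ), ∀ x ∈ s, g x = f x)
    (d : ℕ) (c : Equiv.Perm (Fin d) → F) (hc : c 1 ≠ 0)
    (hm : ∀ r : Fin d → R, ∑ σ, c σ • (List.ofFn (fun p => r (σ p))).prod = 0) :
    Module.Finite K V := by
  classical
  by_contra hfin
  let b := Module.Basis.ofVectorSpace K V
  have hinf : Infinite (Module.Basis.ofVectorSpaceIndex K V) := by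
    by_contra h
    rw [not_infinite_iff_finite] at h
    exact hfin (Module.Finite.of_basis b)
  let e := Infinite.natEmbedding (Module.Basis.ofVectorSpaceIndex K V)
  have hy : ∀ j : ℕ, ∃ y ∈ Submodule.span K (Set.range φ), ∀ k ≤ d,
      y (b (e k)) = if k = j + 1 then b (e j) else 0 := by
    intro j
    obtain ⟨g, hg, hg'⟩ := dense (b.constr K (fun m => if m = e (j+1) then b (e j) else 0))
      ((Finset.range (d+1)).image (fun k => b (e k)))
    refine ⟨g, hg, fun k hk => ?_⟩
    rw [hg' _ (Finset.mem_image_of_mem _ (by simp; omega)), Module.Basis.constr_basis]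
    simp
  choose y hy1 hy2 using hy
  have hA : ∀ (l : List ℕ) (k : ℕ), k ≤ d → (l.map y).prod (b (e k)) = 0 ∨
      ∃ m, m + l.length = k ∧ l = List.range' m l.length := by
    intro l
    induction l using List.reverseRecOn with
    | nil => intro k _; right; exact ⟨k, by simp⟩
    | append_singleton l j ih =>
      intro k hk
      rw [List.map_append, List.prod_append]
      simp only [List.map_cons, List.map_nil, List.prod_cons, List.prod_nil, mul_one, Module.End.mul_apply]
      rw [hy2 j k hk]
      split_ifs with h
      · rcases ih j (by omega) with h0 | ⟨m, h1, h2⟩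
        · left; exact h0
        · right
          refine ⟨m, by simp; omega, ?_⟩
          rw [List.length_append, List.length_singleton, List.range'_concat]
          rw [← h2]; simp; omega
      · left; simp
  have hB : ∀ n m, m + n ≤ d → ((List.range' m n).map y).prod (b (e (m+n))) = b (e m) := by
    intro n
    induction n with
    | zero => intro m _; simp
    | succ n ih =>
      intro m hmn
      rw [List.range'_concat, List.map_append, List.prod_append]
      simp only [List.map_cons, List.map_nil, List.prod_cons, List.prod_nil, mul_one, Module.End.mul_apply]
      rw [hy2 _ _ hmn, if_pos (by omega), one_mul]
      exact ih m (by omega)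
  let P : MultilinearMap K (fun _ : Fin d => Module.End K V) (Module.End K V) :=
    ∑ σ : Equiv.Perm (Fin d), algebraMap F K (c σ) •
      (MultilinearMap.mkPiAlgebraFin K d (Module.End K V)).domDomCongr σ
  have hP : ∀ g, P g = ∑ σ : Equiv.Perm (Fin d), algebraMap F K (c σ) •
      (List.ofFn (fun p => g (σ p))).prod := by
    intro g
    simp [P, MultilinearMap.mkPiAlgebraFin_apply]
  have hP0 := pin_vanish P (Set.range φ) (by
    intro g hg
    choose r hr using hg
    rw [hP]
    have := congrArg φ (hm r)
    rw [map_zero, map_sum] at this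
    rw [← this]
    refine Finset.sum_congr rfl fun σ _ => ?_
    rw [Algebra.smul_def (c σ), map_mul, hφ, smul_mul_assoc, one_mul, map_list_prod, List.map_ofFn]
    congr 3
    funext p
    exact (hr _).symm) (fun j => y j) (fun i => hy1 i)
  rw [hP] at hP0
  have h1 := LinearMap.congr_fun hP0 (b (e d))
  rw [LinearMap.sum_apply, Finset.sum_eq_single 1] at h1
  · have h2 := hB d 0 (by simp)
    rw [zero_add] at h2
    have h3 : (List.ofFn (fun p : Fin d => y ((1 : Equiv.Perm (Fin d)) p))) = (List.range' 0 d).map y := by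
      rw [← List.range_eq_range']
      apply List.ext_getElem <;> simp
    rw [h3, LinearMap.smul_apply, h2, LinearMap.zero_apply] at h1
    rcases smul_eq_zero.1 h1 with h | h
    · exact hc (by simpa using h)
    · exact b.ne_zero _ h
  · intro σ _ hσ
    have h3 : (List.ofFn (fun p : Fin d => y (σ p))) = (List.ofFn (fun p => (σ p : ℕ))).map y := by
      rw [List.map_ofFn]; rfl
    rw [h3, LinearMap.smul_apply]
    rcases hA (List.ofFn (fun p => (σ p : ℕ))) d le_rfl with h | ⟨m, h4, h5⟩
    · rw [h, smul_zero]
    · exfalso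
      apply hσ
      rw [List.length_ofFn] at h4 h5
      have : m = 0 := by omega
      subst this
      ext p
      have := congrArg (fun l : List ℕ => l[(p : ℕ)]?) h5
      simpa using this
  · simp

theorem pin_final {F R V : Type} [Field F] [Ring R] [Algebra F R] [AddCommGroup V] [Module F V]
    [Module R V] [IsScalarTower F R V] [FiniteDimensional F V] (a b : R)
    (hb : b ∈ TwoSidedIdeal.span {a}) (τ : V →ₗ[R] V) (v : V) (hv : v ≠ 0) (h : b • τ v = v)
    (H : ∀ (V : Type) [AddCommGroup V] [Module F V], FiniteDimensional F V →
      ∀ ρ : R →ₐ[F] Module.End F V, Nontrivial V →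
        (∀ W : Submodule F V, (∀ r : R, ∀ v ∈ W, ρ r v ∈ W) → W = ⊥ ∨ W = ⊤) →
        ρ a = 0) : False := by
  let M : Submodule R V := Submodule.span R (Set.range fun k : ℕ => (τ ^ k) v)
  have hvM : ∀ k : ℕ, (τ ^ k) v ∈ M := fun k => Submodule.subset_span ⟨k, rfl⟩
  have hfV : Module.Finite F M := by
    have : Module.Finite F (M.restrictScalars F) := inferInstance
    exact this
  have : Module.Finite R M := Module.Finite.of_restrictScalars_finite F R M
  have : Nontrivial M := ⟨⟨⟨v, hvM 0⟩, 0, by simpa [Subtype.ext_iff] using hv⟩⟩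
  obtain ⟨N, hN⟩ : ∃ N : Submodule R M, IsCoatom N := IsCoatomic.exists_coatom _
  have hs : IsSimpleModule R (M ⧸ N) := isSimpleModule_iff_isCoatom.2 hN
  have hnt : Nontrivial (M ⧸ N) := IsSimpleModule.nontrivial R _
  have hfd : FiniteDimensional F (M ⧸ N) :=
    Module.Finite.of_surjective ((N.mkQ).restrictScalars F) (Submodule.mkQ_surjective N)
  have h0 := H (M ⧸ N) hfd (Algebra.lsmul F F (M ⧸ N)) hnt (by
    intro W hW
    let W' : Submodule R (M ⧸ N) := { W with smul_mem' := fun r x hx => hW r x hx }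
    rcases eq_bot_or_eq_top W' with h | h
    · left
      ext x
      have : x ∈ W' ↔ x ∈ (⊥ : Submodule R (M ⧸ N)) := by rw [h]
      exact this
    · right
      ext x
      have : x ∈ W' ↔ x ∈ (⊤ : Submodule R (M ⧸ N)) := by rw [h]
      exact this)
  have hb0 : (Algebra.lsmul F F (M ⧸ N) : R →ₐ[F] Module.End F (M ⧸ N)) b = 0 := by
    have : TwoSidedIdeal.span {a} ≤ TwoSidedIdeal.ker (Algebra.lsmul F F (M ⧸ N) : R →ₐ[F] Module.End F (M ⧸ N)) := by
      rw [TwoSidedIdeal.span_le]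
      rintro _ rfl
      exact (TwoSidedIdeal.mem_ker _).2 h0
    exact (TwoSidedIdeal.mem_ker _).1 (this hb)
  have hbN : ∀ x : M, b • x ∈ N := by
    intro x
    have := LinearMap.congr_fun hb0 (N.mkQ x)
    rw [← Submodule.ker_mkQ N, LinearMap.mem_ker, map_smul]
    exact this
  have hvk : ∀ k : ℕ, b • (τ ^ (k+1)) v = (τ ^ k) v := by
    intro k
    rw [pow_succ, Module.End.mul_apply, ← map_smul, h]
  apply hN.1
  have hMN : M ≤ N.map M.subtype := by
    refine Submodule.span_le.2 ?_
    rintro _ ⟨k, rfl⟩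
    refine ⟨b • ⟨_, hvM (k+1)⟩, hbN _, ?_⟩
    simpa using hvk k
  rw [eq_top_iff]
  rintro ⟨x, hx⟩ -
  obtain ⟨z, hz, hz'⟩ := hMN hx
  have : z = ⟨x, hx⟩ := Subtype.ext hz'
  rwa [← this]

open Polynomial in
theorem pin_maxideal {R : Type} [Ring R] (b : R) (hb : ¬ IsNilpotent b) :
    ∃ M : Ideal R[X], M.IsMaximal ∧ (1 - C b * X : R[X]) ∈ M := by
  have hne : Ideal.span {(1 - C b * X : R[X])} ≠ ⊤ := by
    intro h
    have h1 : (1 : R[X]) ∈ Ideal.span {(1 - C b * X : R[X])} := by rw [h]; trivial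
    obtain ⟨p, hp⟩ := Ideal.mem_span_singleton'.1 h1
    rw [mul_sub, mul_one, ← mul_assoc] at hp
    have hk : ∀ k, p.coeff k = b ^ k := by
      intro k
      induction k with
      | zero =>
        have := congrArg (fun q => coeff q 0) hp
        simpa using this
      | succ k ih =>
        have := congrArg (fun q => coeff q (k+1)) hp
        simp [coeff_one, sub_eq_zero] at this
        rw [this, ih, pow_succ]
    apply hb
    refine ⟨p.natDegree + 1, ?_⟩
    rw [← hk]
    exact coeff_eq_zero_of_natDegree_lt (Nat.lt_succ_self _)
  obtain ⟨M, hM, hle⟩ := Ideal.exists_le_maximal _ hne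
  exact ⟨M, hM, hle (Ideal.subset_span rfl)⟩

theorem pin_maxcomm (D : Type) [Ring D] : ∃ T : Set D, (∀ x ∈ T, ∀ y ∈ T, x * y = y * x) ∧
    ∀ x, (∀ y ∈ T, y * x = x * y) → x ∈ T := by
  obtain ⟨T, hT⟩ := zorn_subset {s : Set D | ∀ x ∈ s, ∀ y ∈ s, x * y = y * x} (by
    intro c hc hchain
    refine ⟨⋃₀ c, ?_, fun s hs => Set.subset_sUnion_of_mem hs⟩
    rintro x ⟨s, hs, hxs⟩ y ⟨t, ht, hyt⟩
    rcases hchain.total hs ht with h | h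
    · exact hc ht x (h hxs) y hyt
    · exact hc hs x hxs y (h hyt))
  refine ⟨T, hT.1, fun x hx => ?_⟩
  have h1 : insert x T ∈ {s : Set D | ∀ x ∈ s, ∀ y ∈ s, x * y = y * x} := by
    rintro y (rfl | hy) z (rfl | hz)
    · rfl
    · exact (hx z hz).symm
    · exact hx y hy
    · exact hT.1 y hy z hz
  exact hT.2 h1 (Set.subset_insert _ _) (Set.mem_insert _ _)

open Polynomial in
theorem pin_dense {R K V : Type} [Ring R] [Field K] [AddCommGroup V] [Module K V]
    [Module R[X] V] [IsSimpleModule R[X] V] [SMulCommClass K R[X] V]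
    (hmax : ∀ g : Module.End R[X] V, (∀ (k : K) (v : V), g (k • v) = k • g v) →
      ∃ k : K, ∀ v, g v = k • v)
    (φ : R →+* Module.End K V) (hφ : ∀ r v, φ r v = (C r : R[X]) • v)
    (τ : K) (hτ : ∀ v : V, (X : R[X]) • v = τ • v)
    (f : Module.End K V) (s : Finset V) :
      ∃ g ∈ Submodule.span K (Set.range φ), ∀ x ∈ s, g x = f x := by
  let B : Subalgebra K (Module.End K V) := Algebra.adjoin K (Set.range φ)
  have hpoly : ∀ (P : V → Prop) (v : V) (p : R[X]), (∀ x y, P x → P y → P (x + y)) →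
      (∀ (r : R) x, P x → P (φ r x)) → (∀ x, P x → P (τ • x)) → P v → P (p • v) := by
    intro P v p h1 h2 h3 hv
    induction p using Polynomial.induction_on' with
    | add p q hp hq => rw [add_smul]; exact h1 _ _ hp hq
    | monomial n r =>
      rw [← C_mul_X_pow_eq_monomial, mul_smul, ← hφ]
      apply h2
      induction n with
      | zero => simpa using hv
      | succ n ih => rw [pow_succ', mul_smul, hτ]; exact h3 _ ih
  have hBφ : ∀ r, φ r ∈ B := fun r => Algebra.subset_adjoin ⟨r, rfl⟩
  have : Nontrivial V := IsSimpleModule.nontrivial R[X] V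
  have hBsimple : IsSimpleModule B V := by
    rw [isSimpleModule_iff]
    refine { eq_bot_or_eq_top := fun W => ?_ }
    let W' : Submodule R[X] V := 
      { W with
        smul_mem' := fun p x hx => hpoly (fun y => y ∈ W) x p (fun _ _ => W.add_mem)
          (fun r x hx => W.smul_mem (⟨φ r, hBφ r⟩ : B) hx)
          (fun x hx => W.smul_mem (algebraMap K B τ) hx) hx }
    rcases eq_bot_or_eq_top W' with h | h
    · left
      ext x
      have : x ∈ W' ↔ x ∈ (⊥ : Submodule R[X] V) := by rw [h]
      exact this
    · right
      ext x
      have : x ∈ W' ↔ x ∈ (⊤ : Submodule R[X] V) := by rw [h]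
      exact this
  have hend : ∀ g : Module.End B V, ∃ k : K, ∀ v, g v = k • v := by
    intro g
    have hgK : ∀ (k : K) (v : V), g (k • v) = k • g v := fun k v => g.map_smul (algebraMap K B k) v
    have hgR : ∀ (r : R) (v : V), g (φ r v) = φ r (g v) := fun r v => g.map_smul (⟨φ r, hBφ r⟩ : B) v
    have hgX : ∀ (p : R[X]) (v : V), g (p • v) = p • g v := by
      intro p v
      induction p using Polynomial.induction_on' with
      | add p q hp hq => rw [add_smul, add_smul, map_add, hp, hq]
      | monomial n r =>
        rw [← C_mul_X_pow_eq_monomial, mul_smul, mul_smul, ← hφ, ← hφ, hgR]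
        congr 1
        induction n with
        | zero => simp
        | succ n ih => rw [pow_succ', mul_smul, mul_smul, hτ, hτ, hgK, ih]
    exact hmax { toFun := g, map_add' := g.map_add, map_smul' := hgX } hgK
  let f' : Module.End (Module.End B V) V :=
    { toFun := f
      map_add' := f.map_add
      map_smul' := by
        intro g v
        obtain ⟨k, hk⟩ := hend g
        change f (g v) = g (f v)
        rw [hk, hk, map_smul] }
  obtain ⟨g, hg⟩ := jacobson_density f' s
  refine ⟨g.1, ?_, fun x hx => (hg x hx).symm⟩
  have h1 : Submodule.span K (Set.range φ) = Subalgebra.toSubmodule B := by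
    rw [Algebra.adjoin_eq_span]
    congr 1
    have := Submonoid.closure_eq (MonoidHom.mrange (φ : R →* Module.End K V))
    have h2 := congrArg (fun s : Submonoid (Module.End K V) => (s : Set (Module.End K V))) this
    simp only [MonoidHom.coe_mrange] at h2
    exact h2.symm
  rw [h1]
  exact g.2

theorem pin_field {F D : Type} [Field F] [Ring D] [Algebra F D] [Nontrivial D]
    (hD : ∀ x : D, x ≠ 0 → IsUnit x) :
    ∃ (K : Type) (_ : Field K) (_ : Algebra F K) (j : K →+* D),
      (∀ c : F, j (algebraMap F K c) = algebraMap F D c) ∧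
      (∀ g : D, (∀ k, j k * g = g * j k) → ∃ k, j k = g) := by
  obtain ⟨T, hT1, hT2⟩ := pin_maxcomm D
  let K := Subalgebra.centralizer F T
  have hKT : ∀ x : D, x ∈ K ↔ x ∈ T := by
    intro x
    rw [Subalgebra.mem_centralizer_iff]
    exact ⟨hT2 x, fun hx y hy => hT1 y hy x hx⟩
  have hfield : IsField K := by
    refine ⟨⟨0, 1, zero_ne_one⟩, ?_, ?_⟩
    · intro x y
      exact Subtype.ext (hT1 _ ((hKT _).1 x.2) _ ((hKT _).1 y.2))
    · rintro ⟨x, hx⟩ hx0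
      have hx1 : x ≠ 0 := fun h => hx0 (Subtype.ext h)
      obtain ⟨u, rfl⟩ := hD x hx1
      refine ⟨⟨(u⁻¹ : Dˣ), ?_⟩, ?_⟩
      · rw [Subalgebra.mem_centralizer_iff] at hx ⊢
        intro g hg
        have h1 : Commute g (u : D) := hx g hg
        exact h1.units_inv_right
      · exact Subtype.ext (by simp)
  refine ⟨K, hfield.toField, K.algebra, K.val.toRingHom, fun c => rfl, fun g hg => ?_⟩
  refine ⟨⟨g, ?_⟩, rfl⟩
  rw [hKT]
  exact hT2 g fun y hy => hg ⟨y, (hKT y).2 hy⟩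

open Polynomial in
theorem pin_simple2 {F R V : Type} [Field F] [Ring R] [Algebra F R] (b : R)
    [AddCommGroup V] [Module R[X] V] [IsSimpleModule R[X] V] [Module F V] [IsScalarTower F R[X] V]
    (v : V) (hv : v ≠ 0) (hbv : (C b : R[X]) • (X : R[X]) • v = v) :
    ∃ (K : Type) (_ : Field K) (_ : Algebra F K) (_ : Module K V)
      (φ : R →+* Module.End K V),
      (∀ c : F, φ (algebraMap F R c) = algebraMap F K c • 1) ∧
      (∀ (f : Module.End K V) (s : Finset V),
        ∃ g ∈ Submodule.span K (Set.range φ), ∀ x ∈ s, g x = f x) ∧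
      ∃ (τ : K), φ b (τ • v) = v := by
  have hnt : Nontrivial V := IsSimpleModule.nontrivial R[X] V
  obtain ⟨K, _, _, j, hj1, hj2⟩ := pin_field (F := F) (D := Module.End R[X] V)
    (fun x hx => (Module.End.isUnit_iff x).2 (LinearMap.bijective_of_ne_zero hx))
  let τ0 : Module.End R[X] V :=
    { toFun := fun v => (X : R[X]) • v
      map_add' := smul_add _
      map_smul' := fun p v => by
        simp only [RingHom.id_apply, smul_smul, X_mul] }
  obtain ⟨τ, hτ⟩ := hj2 τ0 (fun k => LinearMap.ext fun v => (j k).map_smul _ _)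
  letI : Module K V := Module.compHom V j
  have hsm : ∀ (k : K) (v : V), k • v = j k v := fun k v => rfl
  have hcomm : SMulCommClass K R[X] V := ⟨fun k p v => (j k).map_smul p v⟩
  have hcomm2 : SMulCommClass R[X] K V := SMulCommClass.symm _ _ _
  have hτ' : ∀ v : V, (X : R[X]) • v = τ • v := fun v => by rw [hsm, hτ]; rfl
  let φ : R →+* Module.End K V := (Module.toModuleEnd K (S := R[X]) V).comp C
  have hφ : ∀ r v, φ r v = (C r : R[X]) • v := fun r v => rfl
  refine ⟨K, inferInstance, inferInstance, inferInstance, φ, ?_, ?_, τ, ?_⟩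
  · intro c
    ext v
    rw [hφ, LinearMap.smul_apply, hsm, hj1]
    change (C (algebraMap F R c) : R[X]) • v = c • v
    rw [← Polynomial.algebraMap_apply, algebraMap_smul]
  · refine pin_dense (fun g hg => ?_) φ hφ τ hτ'
    obtain ⟨k, hk⟩ := hj2 g (fun k => LinearMap.ext fun v => (hg k v).symm)
    exact ⟨k, fun v => by rw [hsm, hk]⟩
  · rw [hφ, ← hτ', hbv]

open Polynomial in
theorem pin_simple {F R : Type} [Field F] [Ring R] [Algebra F R] (b : R) (hb : ¬ IsNilpotent b) :
    ∃ (K : Type) (_ : Field K) (_ : Algebra F K) (V : Type) (_ : AddCommGroup V) (_ : Module K V)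
      (φ : R →+* Module.End K V),
      (∀ c : F, φ (algebraMap F R c) = algebraMap F K c • 1) ∧
      (∀ (f : Module.End K V) (s : Finset V),
        ∃ g ∈ Submodule.span K (Set.range φ), ∀ x ∈ s, g x = f x) ∧
      ∃ (τ : K) (v : V), v ≠ 0 ∧ φ b (τ • v) = v := by
  obtain ⟨M, hM, hbM⟩ := pin_maxideal b hb
  have hsimple : IsSimpleModule R[X] (R[X] ⧸ M) := isSimpleModule_iff_isCoatom.2 hM.out
  have hv : (Submodule.Quotient.mk 1 : R[X] ⧸ M) ≠ 0 := by
    intro h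
    rw [Submodule.Quotient.mk_eq_zero] at h
    exact hM.ne_top ((Ideal.eq_top_iff_one M).2 h)
  have hbv : (C b : R[X]) • (X : R[X]) • (Submodule.Quotient.mk 1 : R[X] ⧸ M)
      = Submodule.Quotient.mk 1 := by
    rw [← Submodule.Quotient.mk_smul, ← Submodule.Quotient.mk_smul, eq_comm, Submodule.Quotient.eq]
    simpa using hbM
  obtain ⟨K, i1, i2, i3, φ, h1, h2, τ, h3⟩ := pin_simple2 (F := F) b _ hv hbv
  exact ⟨K, i1, i2, _, _, i3, φ, h1, h2, τ, _, hv, h3⟩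

theorem pin_specialize {F R K V : Type} [Field F] [Ring R] [Algebra F R] [Field K] [Algebra F K]
    [AddCommGroup V] [Module K V] [Module.Finite K V] (hfg : Algebra.FiniteType F R)
    (φ : R →+* Module.End K V)
    (hφ : ∀ c : F, φ (algebraMap F R c) = algebraMap F K c • 1)
    (b : R) (τ : K) (v : V) (hv : v ≠ 0) (h : φ b (τ • v) = v) :
    ∃ (L : Type) (_ : Field L) (_ : Algebra F L) (_ : Module.Finite F L) (n : ℕ)
      (ψ : R →ₐ[F] Matrix (Fin n) (Fin n) L) (t : L) (w : Fin n → L), w ≠ 0 ∧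
      Matrix.mulVec (ψ b) (t • w) = w := by
  classical
  let n := Module.finrank K V
  let bas := Module.finBasis K V
  let φ' : R →ₐ[F] Matrix (Fin n) (Fin n) K :=
    { (LinearMap.toMatrixAlgEquiv bas : Module.End K V →+* _).comp φ with
      commutes' := fun c => by
        change LinearMap.toMatrixAlgEquiv bas (φ (algebraMap F R c)) = _
        rw [hφ, map_smul, map_one, algebraMap_smul, Algebra.algebraMap_eq_smul_one] }
  let u : Fin n → K := bas.repr v
  have hu : Matrix.mulVec (φ' b) (τ • u) = u := by
    have := LinearMap.toMatrix_mulVec_repr bas bas (φ b) (τ • v)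
    rw [h, map_smul] at this
    exact this
  obtain ⟨i0, hi0⟩ : ∃ i, u i ≠ 0 := by
    by_contra hcon
    push Not at hcon
    apply hv
    apply bas.repr.map_eq_zero_iff.1
    ext i
    exact hcon i
  obtain ⟨s, hs⟩ := hfg.out
  let G : Finset K := {τ, (u i0)⁻¹} ∪ Finset.univ.image u ∪
    s.biUnion (fun r => Finset.univ.image (fun p : Fin n × Fin n => φ' r p.1 p.2))
  let K0 : Subalgebra F K := Algebra.adjoin F (G : Set K)
  have hG : ∀ x ∈ G, x ∈ K0 := fun x hx => Algebra.subset_adjoin hx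
  have hK0 : Algebra.FiniteType F K0 := K0.fg_iff_finiteType.1 ⟨G, rfl⟩
  let ι : Matrix (Fin n) (Fin n) K0 →ₐ[F] Matrix (Fin n) (Fin n) K := K0.val.mapMatrix
  have hι : Function.Injective ι := by
    intro A B hAB
    ext i j
    exact congrFun (congrFun hAB i) j
  have hrange : ∀ r, φ' r ∈ ι.range := by
    have : (⊤ : Subalgebra F R) ≤ ι.range.comap φ' := by
      rw [← hs]
      refine Algebra.adjoin_le ?_
      intro r hr
      refine ⟨Matrix.of fun i j => ⟨φ' r i j, hG _ ?_⟩, ?_⟩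
      · apply Finset.mem_union_right
        rw [Finset.mem_biUnion]
        exact ⟨r, hr, Finset.mem_image.2 ⟨(i, j), Finset.mem_univ _, rfl⟩⟩
      · ext i j; rfl
    intro r
    exact this trivial
  let ψ0 : R →ₐ[F] Matrix (Fin n) (Fin n) K0 :=
    (AlgEquiv.ofInjective ι hι).symm.toAlgHom.comp (φ'.codRestrict ι.range hrange)
  have hψ0 : ∀ r, ι (ψ0 r) = φ' r := by
    intro r
    have := (AlgEquiv.ofInjective ι hι).apply_symm_apply (φ'.codRestrict ι.range hrange r)
    exact congrArg Subtype.val this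
  have hτG : τ ∈ G := by simp [G]
  have huG : ∀ i, u i ∈ G := fun i => by simp [G]
  have hiG : (u i0)⁻¹ ∈ G := by simp [G]
  let t0 : K0 := ⟨τ, hG _ hτG⟩
  let w0 : Fin n → K0 := fun i => ⟨u i, hG _ (huG i)⟩
  have hw0 : Matrix.mulVec (ψ0 b) (t0 • w0) = w0 := by
    funext i
    apply Subtype.ext
    have h1 := congrFun hu i
    rw [← hψ0] at h1
    refine Eq.trans ?_ h1
    simp only [Matrix.mulVec, dotProduct]
    rw [AddSubmonoidClass.coe_finsetSum]
    rfl
  obtain ⟨m, hm⟩ := Ideal.exists_maximal K0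
  letI : Field (K0 ⧸ m) := Ideal.Quotient.field m
  let q : K0 →ₐ[F] K0 ⧸ m := Ideal.Quotient.mkₐ F m
  have hft : Algebra.FiniteType F (K0 ⧸ m) := 
    Algebra.FiniteType.of_surjective q (Ideal.Quotient.mkₐ_surjective F m)
  refine ⟨K0 ⧸ m, inferInstance, inferInstance, finite_of_finite_type_of_isJacobsonRing F (K0 ⧸ m),
    n, q.mapMatrix.comp ψ0, q t0, fun i => q (w0 i), ?_, ?_⟩
  · intro h0
    have h1 : q (w0 i0) = 0 := congrFun h0 i0
    have h2 : w0 i0 * ⟨(u i0)⁻¹, hG _ hiG⟩ = 1 := Subtype.ext (mul_inv_cancel₀ hi0)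
    have h3 := congrArg q h2
    rw [map_mul, h1, zero_mul, map_one] at h3
    exact zero_ne_one h3
  · funext i
    have h1 := congrArg q (congrFun hw0 i)
    refine Eq.trans ?_ h1
    simp [Matrix.mulVec, dotProduct, map_sum]

theorem pin_easy {F R V : Type} [Field F] [Ring R] [Algebra F R] [AddCommGroup V] [Module F V]
    (a : R) (hnil : ∀ x ∈ TwoSidedIdeal.span {a}, IsNilpotent x)
    (ρ : R →ₐ[F] Module.End F V)
    (hW : ∀ W : Submodule F V, (∀ r : R, ∀ v ∈ W, ρ r v ∈ W) → W = ⊥ ∨ W = ⊤) : ρ a = 0 := by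
  by_contra ha
  obtain ⟨v, hv⟩ : ∃ v, ρ a v ≠ 0 := by
    by_contra h
    push Not at h
    exact ha (LinearMap.ext h)
  let I := TwoSidedIdeal.span {a}
  have haI : a ∈ I := TwoSidedIdeal.subset_span rfl
  let W : Submodule F V :=
    { carrier := {w | ∃ x ∈ I, ρ x v = w}
      add_mem' := by
        rintro _ _ ⟨x, hx, rfl⟩ ⟨y, hy, rfl⟩
        exact ⟨x + y, I.add_mem hx hy, by simp⟩
      zero_mem' := ⟨0, I.zero_mem, by simp⟩
      smul_mem' := by
        rintro c _ ⟨x, hx, rfl⟩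
        refine ⟨algebraMap F R c * x, I.mul_mem_left _ _ hx, ?_⟩
        rw [← Algebra.smul_def, map_smul]; rfl }
  have hinv : ∀ r : R, ∀ w ∈ W, ρ r w ∈ W := by
    rintro r _ ⟨x, hx, rfl⟩
    exact ⟨r * x, I.mul_mem_left _ _ hx, by simp⟩
  rcases hW W hinv with h | h
  · have : ρ a v ∈ W := ⟨a, haI, rfl⟩
    rw [h] at this
    exact hv (by simpa using this)
  · have : v ∈ W := by rw [h]; trivial
    obtain ⟨x, hx, hxv⟩ := this
    obtain ⟨n, hn⟩ := hnil x hx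
    have hk : ∀ k : ℕ, ρ (x ^ k) v = v := by
      intro k
      induction k with
      | zero => simp
      | succ k ih => rw [pow_succ, map_mul, Module.End.mul_apply, hxv, ih]
    have h0 := hk n
    rw [hn] at h0
    simp at h0
    apply hv
    rw [← h0]; simp

/-- **Nullstellensatz for finitely generated PI algebras.** Let `R` be a finitely generated
`F`-algebra satisfying a nonzero polynomial identity. For `a ∈ R` the following are
equivalent: (1) `a` acts as zero in every finite-dimensional irreducible representation of
`R` (an `F`-algebra map `ρ : R → End_F V` with `V ≠ 0` finite dimensional and no proper
nonzero `ρ(R)`-invariant subspace — note that `R`-submodules via `ρ` are exactly the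
`ρ(R)`-invariant `F`-subspaces); (2) `a` belongs to the nil radical of `R`, i.e. the
two-sided ideal generated by `a` is nil. -/
theorem pi_nullstellensatz (F : Type) [Field F] (R : Type) [Ring R] [Algebra F R]
    (hfg : Algebra.FiniteType F R)
    (hPI : ∃ f : FreeAlgebra F ℕ, f ≠ 0 ∧ ∀ a : ℕ → R, (FreeAlgebra.lift F a) f = 0)
    (a : R) :
    (∀ (V : Type) [AddCommGroup V] [Module F V], FiniteDimensional F V →
      ∀ ρ : R →ₐ[F] Module.End F V, Nontrivial V →
        (∀ W : Submodule F V, (∀ r : R, ∀ v ∈ W, ρ r v ∈ W) → W = ⊥ ∨ W = ⊤) →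
        ρ a = 0) ↔
      (∀ x ∈ TwoSidedIdeal.span {a}, IsNilpotent x) := by
  constructor
  · intro H b hb
    by_contra hnil
    obtain ⟨d, c, hc, hm⟩ := pin_multilin hPI
    obtain ⟨K, _, _, V, _, _, φ, h1, h2, τ, v, hv, h3⟩ := pin_simple (F := F) b hnil
    have hfin : Module.Finite K V := pin_finite φ h1 h2 d c hc hm
    obtain ⟨L, _, _, _, n, ψ, t, w, hw, h4⟩ := pin_specialize hfg φ h1 b τ v hv h3
    letI : Module R (Fin n → L) := Module.compHom (Fin n → L)
      ((Matrix.toLinAlgEquiv' : Matrix (Fin n) (Fin n) L ≃ₐ[L] _).toRingEquiv.toRingHom.comp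
        ψ.toRingHom)
    have hsm : ∀ (r : R) (x : Fin n → L), r • x = Matrix.mulVec (ψ r) x := fun r x => rfl
    have htow : IsScalarTower F R (Fin n → L) := ⟨fun c r x => by
      rw [hsm, hsm, map_smul, Matrix.smul_mulVec]⟩
    let T : (Fin n → L) →ₗ[R] (Fin n → L) :=
      { toFun := fun x => t • x
        map_add' := smul_add t
        map_smul' := fun r x => by
          simp only [RingHom.id_apply]
          rw [hsm, hsm, Matrix.mulVec_smul] }
    exact pin_final (F := F) a b hb T w hw h4 H
  · intro hnil V _ _ _ ρ _ hW
    exact pin_easy a hnil ρ hW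
end
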